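/- arXiv:0802.3021 — 2 statements merged into one kernel-verified Lean document; each statement's English description precedes it below -/
import Mathlib

section
/- For integers n ≥ ω ≥ 0 of opposite parity, with k = (n + ω − 1)/2 and l = (n − ω + 1)/2, the invariant g = φ ∘ f^X of the curve c_{ω,n} equals g(c_{ω,n}) = k(l + k − 1) + l(k − l + 1) = (1/2)n² + (ω − 1)n + (1/2)(1 − ω²). -/
open Set
open scoped ENNReal

noncomputable section

namespace CurvePaper


/-- The determinant of two vectors in the plane `ℝ² ≅ ℂ`. -/
def det2 (u v : ℂ) : ℝ := u.re * v.im - u.im * v.re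

/-- The determinant of three vectors in `ℝ³`. -/
def det3 (a b c : EuclideanSpace ℝ (Fin 3)) : ℝ :=
  a 0 * (b 1 * c 2 - b 2 * c 1) - a 1 * (b 0 * c 2 - b 2 * c 0) + a 2 * (b 0 * c 1 - b 1 * c 0)

/-- The homomorphism `φ : 𝕏 → ℤ`, `X_{a,b} ↦ a - b`, on the free abelian group `𝕏`
with basis `{X_{a,b} : a b ∈ ℤ}`. -/
def phi : FreeAbelianGroup (ℤ × ℤ) →+ ℤ :=
  FreeAbelianGroup.lift fun p : ℤ × ℤ => p.1 - p.2

/-! ### Planar curves -/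

/-- A closed planar curve: a smooth immersion of the circle `ℝ/ℤ` into the plane. -/
structure PlanarCurve : Type where
  toFun : ℝ → ℂ
  periodic : Function.Periodic toFun 1
  smooth : ContDiff ℝ (⊤ : ℕ∞) toFun
  immersion : ∀ t : ℝ, deriv toFun t ≠ 0

namespace PlanarCurve

/-- The number of parameters in one period mapping to a given point. -/
def multF (f : ℝ → ℂ) (p : ℂ) : ℕ := Set.ncard {t ∈ Set.Ico (0:ℝ) 1 | f t = p}

/-- All self-intersections of `f` at the point `p` are transverse. -/
def TransverseF (f : ℝ → ℂ) (p : ℂ) : Prop :=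
  ∀ s ∈ Set.Ico (0:ℝ) 1, ∀ t ∈ Set.Ico (0:ℝ) 1, s ≠ t → f s = p → f t = p →
    det2 (deriv f s) (deriv f t) ≠ 0

/-- The set of self-intersection points of a parametrized curve. -/
def crossingSetF (f : ℝ → ℂ) : Set ℂ := {p : ℂ | 2 ≤ multF f p}

/-- A parametrized curve is stable if its only self-intersections are finitely many
transverse double points. -/
def StableF (f : ℝ → ℂ) : Prop :=
  (crossingSetF f).Finite ∧ ∀ p : ℂ, multF f p ≤ 2 ∧ (multF f p = 2 → TransverseF f p)

/-- A planar curve is stable if its only self-intersections are transverse double points. -/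
def Stable (c : PlanarCurve) : Prop := StableF c.toFun

/-- The number of crossings (self-intersection points) of a planar curve. -/
def crossings (c : PlanarCurve) : ℕ := (crossingSetF c.toFun).ncard

/-- `c` has Whitney winding number `ω`: the degree of the normalized derivative map
`S¹ → S¹`, expressed via a continuous lift of its angle. -/
def HasWhitney (c : PlanarCurve) (ω : ℤ) : Prop :=
  ∃ θ : ℝ → ℝ, Continuous θ ∧
    (∀ t : ℝ, deriv c.toFun t = (‖deriv c.toFun t‖ : ℂ) * Complex.exp ((θ t : ℂ) * Complex.I)) ∧
    θ 1 - θ 0 = 2 * Real.pi * (ω : ℝ)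

/-- `H` is a regular homotopy between parametrized curves `f` and `g`:
a continuously varying family of immersed closed curves. -/
def IsRegHomotopy (f g : ℝ → ℂ) (H : ℝ → ℝ → ℂ) : Prop :=
  (Continuous fun q : ℝ × ℝ => H q.1 q.2) ∧
  (Continuous fun q : ℝ × ℝ => deriv (H q.1) q.2) ∧
  (∀ s : ℝ, Function.Periodic (H s) 1) ∧
  (∀ s : ℝ, ContDiff ℝ (⊤ : ℕ∞) (H s)) ∧
  (∀ s t : ℝ, deriv (H s) t ≠ 0) ∧
  H 0 = f ∧ H 1 = g

/-- Two planar curves are regularly homotopic. -/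
def RegularlyHomotopic (c c' : PlanarCurve) : Prop :=
  ∃ H, IsRegHomotopy c.toFun c'.toFun H

/-- Two planar curves are homotopic through *stable* immersed curves. -/
def StablyHomotopic (c c' : PlanarCurve) : Prop :=
  ∃ H, IsRegHomotopy c.toFun c'.toFun H ∧ ∀ s ∈ Set.Icc (0:ℝ) 1, StableF (H s)

/-- A point of a curve which is either a regular point or a transverse double point. -/
def StablePointF (f : ℝ → ℂ) (p : ℂ) : Prop :=
  multF f p ≤ 1 ∨ (multF f p = 2 ∧ TransverseF f p)

/-- A curve exhibiting a single `J`-type singularity (a first-order tangency of two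
strands), all other points being stable. -/
def JSingF (f : ℝ → ℂ) : Prop :=
  ∃ p : ℂ, multF f p = 2 ∧
    (∀ s ∈ Set.Ico (0:ℝ) 1, ∀ t ∈ Set.Ico (0:ℝ) 1, s ≠ t → f s = p → f t = p →
      ∃ r : ℝ, r ≠ 0 ∧ deriv f t = (r : ℂ) * deriv f s ∧
        det2 (deriv f s) (iteratedDeriv 2 f s) * ‖deriv f t‖ ^ 3 ≠
          (if 0 < r then 1 else -1) * det2 (deriv f t) (iteratedDeriv 2 f t) * ‖deriv f s‖ ^ 3) ∧
    (∀ q : ℂ, q ≠ p → StablePointF f q) ∧ (crossingSetF f).Finite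

/-- A curve exhibiting a single `S`-type singularity (three strands meeting at one point,
pairwise transversally), all other points being stable. -/
def SSingF (f : ℝ → ℂ) : Prop :=
  ∃ p : ℂ, multF f p = 3 ∧ TransverseF f p ∧
    (∀ q : ℂ, q ≠ p → StablePointF f q) ∧ (crossingSetF f).Finite

/-- A `J` move: a regular homotopy between stable curves passing through exactly one
singular moment, of `J`-type. -/
def JMove (c c' : PlanarCurve) : Prop :=
  c.Stable ∧ c'.Stable ∧ ∃ H, IsRegHomotopy c.toFun c'.toFun H ∧
    ∃ s₀ ∈ Set.Ioo (0:ℝ) 1, (∀ s ∈ Set.Icc (0:ℝ) 1, s ≠ s₀ → StableF (H s)) ∧ JSingF (H s₀)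

/-- An `S` move: a regular homotopy between stable curves passing through exactly one
singular moment, of `S`-type. -/
def SMove (c c' : PlanarCurve) : Prop :=
  c.Stable ∧ c'.Stable ∧ ∃ H, IsRegHomotopy c.toFun c'.toFun H ∧
    ∃ s₀ ∈ Set.Ioo (0:ℝ) 1, (∀ s ∈ Set.Icc (0:ℝ) 1, s ≠ s₀ → StableF (H s)) ∧ SSingF (H s₀)

/-- A basic move is a `J` move or an `S` move. -/
def BasicMove (c c' : PlanarCurve) : Prop := JMove c c' ∨ SMove c c'

/-- An increasing `J` move adds two crossings. -/
def IncreasingJMove (c c' : PlanarCurve) : Prop :=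
  JMove c c' ∧ c'.crossings = c.crossings + 2

/-- A decreasing `J` move removes two crossings. -/
def DecreasingJMove (c c' : PlanarCurve) : Prop :=
  JMove c c' ∧ c.crossings = c'.crossings + 2

/-- A `Z` move: the composite of an increasing `J` move, an `S` move and a decreasing
`J` move (sliding an empty 1-gon past a transverse strand). -/
def ZMove (c c' : PlanarCurve) : Prop :=
  ∃ c₁ c₂, IncreasingJMove c c₁ ∧ SMove c₁ c₂ ∧ DecreasingJMove c₂ c'

/-- A sequence of `k` basic moves leading from `c` to `c'` (allowing an initial
deformation through stable curves). -/
def ChainFromTo (c c' : PlanarCurve) (seq : ℕ → PlanarCurve) (k : ℕ) : Prop :=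
  StablyHomotopic c (seq 0) ∧ seq k = c' ∧ ∀ i < k, BasicMove (seq i) (seq (i+1))

/-- The distance between two curves: the minimal number of basic moves needed to pass
from `c` to `c'` (`⊤` if they are not regularly homotopic). -/
def dist (c c' : PlanarCurve) : ℕ∞ :=
  sInf {m : ℕ∞ | ∃ k : ℕ, m = (k : ℕ∞) ∧ ∃ seq : ℕ → PlanarCurve, ChainFromTo c c' seq k}

/-- The diameter of a set of curves. -/
def diam (A : Set PlanarCurve) : ℕ∞ := ⨆ c ∈ A, ⨆ c' ∈ A, dist c c'

/-- `B^ω_n`: the set of all stable planar curves with Whitney number `ω` and at most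
`n` crossings. -/
def B (ω : ℤ) (n : ℕ) : Set PlanarCurve :=
  {c : PlanarCurve | c.Stable ∧ c.HasWhitney ω ∧ c.crossings ≤ n}

/-- A step of the algorithm: an `S` move, a decreasing `J` move, or a `Z` move whose two
intermediate curves have at most `N` crossings; `w` is the number of basic moves used. -/
def AlgStep (N : ℕ) (c c' : PlanarCurve) (w : ℕ) : Prop :=
  (SMove c c' ∧ w = 1) ∨ (DecreasingJMove c c' ∧ w = 1) ∨
  ((∃ c₁ c₂, IncreasingJMove c c₁ ∧ SMove c₁ c₂ ∧ DecreasingJMove c₂ c' ∧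
      c₁.crossings ≤ N ∧ c₂.crossings ≤ N) ∧ w = 3)

/-! #### The invariant `f^X` -/

/-- The set of parameter pairs (in one period) realizing the double points of a curve. -/
def crossingPairsF (f : ℝ → ℂ) : Set (ℝ × ℝ) :=
  {q : ℝ × ℝ | q.1 ∈ Set.Ico (0:ℝ) 1 ∧ q.2 ∈ Set.Ico (0:ℝ) 1 ∧ q.1 < q.2 ∧ f q.1 = f q.2}

/-- The sign `i(v) ∈ {1,-1}` of a double point visited first at time `s` and then at
time `t`: `1` iff the tangents, in the order visited, form a positive basis. -/
def crossSign (f : ℝ → ℂ) (s t : ℝ) : ℤ :=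
  if 0 < det2 (deriv f s) (deriv f t) then 1 else -1

/-- The index `i(e)` of the subarc `e` of `f` on the parameter interval `(α, β)`:
the sum of the signs of the double points of `e`. -/
def arcIndex (f : ℝ → ℂ) (α β : ℝ) : ℤ :=
  ∑ᶠ q ∈ {q : ℝ × ℝ | q.1 ∈ Set.Ioo α β ∧ q.2 ∈ Set.Ioo α β ∧ q.1 < q.2 ∧ f q.1 = f q.2},
    crossSign f q.1 q.2

/-- The order one invariant `f^X(c) = ∑_v X_{a(v),b(v)} ∈ 𝕏`, where for each double
point `v` the two arcs of `c` based at `v` are ordered by the orientation of the tangents. -/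
def fX (c : PlanarCurve) : FreeAbelianGroup (ℤ × ℤ) :=
  ∑ᶠ q ∈ crossingPairsF c.toFun,
    if 0 < det2 (deriv c.toFun q.1) (deriv c.toFun q.2) then
      FreeAbelianGroup.of (arcIndex c.toFun q.1 q.2, arcIndex c.toFun q.2 (q.1 + 1))
    else
      FreeAbelianGroup.of (arcIndex c.toFun q.2 (q.1 + 1), arcIndex c.toFun q.1 q.2)

/-- The integer valued invariant `g = φ ∘ f^X`. -/
def g (c : PlanarCurve) : ℤ := phi (fX c)

/-! #### The standard curves `δ_ω` -/

/-- An explicit stable curve with winding number `m ≥ 1` and `m - 1` (inward) loops. -/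
def deltaFunPos (m : ℕ) : ℝ → ℂ := fun t =>
  Complex.exp (((2 * Real.pi * (m : ℝ) * t : ℝ) : ℂ) * Complex.I) +
    ((2 * (m : ℝ) / 3 : ℝ) : ℂ) * Complex.exp (((2 * Real.pi * t : ℝ) : ℂ) * Complex.I)

/-- The standard planar curve `δ_ω` with Whitney number `ω` and `||ω|-1|` crossings:
for `ω = 0` a figure eight, and for `ω ≠ 0` a round circle with `|ω| - 1` small loops. -/
def deltaFun (ω : ℤ) : ℝ → ℂ :=
  if ω = 0 then
    fun t => ((Real.sin (2 * Real.pi * t) : ℝ) : ℂ) + ((Real.sin (4 * Real.pi * t) : ℝ) : ℂ) * Complex.I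
  else if 0 < ω then deltaFunPos ω.toNat
  else fun t => (starRingEnd ℂ) (deltaFunPos (-ω).toNat t)

end PlanarCurve


/-! ### Spherical curves -/


/-- A closed spherical curve: a smooth immersion of the circle `ℝ/ℤ` into the unit
sphere `S² ⊆ ℝ³`. -/
structure SphericalCurve : Type where
  toFun : ℝ → EuclideanSpace ℝ (Fin 3)
  norm_one : ∀ t : ℝ, ‖toFun t‖ = 1
  periodic : Function.Periodic toFun 1
  smooth : ContDiff ℝ (⊤ : ℕ∞) toFun
  immersion : ∀ t : ℝ, deriv toFun t ≠ 0

namespace SphericalCurve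

def multF (f : ℝ → EuclideanSpace ℝ (Fin 3)) (p : EuclideanSpace ℝ (Fin 3)) : ℕ :=
  Set.ncard {t ∈ Set.Ico (0:ℝ) 1 | f t = p}

/-- Transversality of the branches at `p`: tangent vectors at `p` are pairwise
independent, detected by the `3×3` determinant with the base point `p` (the outward
normal of the sphere, fixing its orientation). -/
def TransverseF (f : ℝ → EuclideanSpace ℝ (Fin 3)) (p : EuclideanSpace ℝ (Fin 3)) : Prop :=
  ∀ s ∈ Set.Ico (0:ℝ) 1, ∀ t ∈ Set.Ico (0:ℝ) 1, s ≠ t → f s = p → f t = p →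
    det3 p (deriv f s) (deriv f t) ≠ 0

def crossingSetF (f : ℝ → EuclideanSpace ℝ (Fin 3)) : Set (EuclideanSpace ℝ (Fin 3)) :=
  {p | 2 ≤ multF f p}

def StableF (f : ℝ → EuclideanSpace ℝ (Fin 3)) : Prop :=
  (crossingSetF f).Finite ∧ ∀ p, multF f p ≤ 2 ∧ (multF f p = 2 → TransverseF f p)

def Stable (c : SphericalCurve) : Prop := StableF c.toFun

def crossings (c : SphericalCurve) : ℕ := (crossingSetF c.toFun).ncard

/-- The curve as a map into the sphere as a subtype. -/
def pt (c : SphericalCurve) (t : ℝ) : Metric.sphere (0 : EuclideanSpace ℝ (Fin 3)) 1 :=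
  ⟨c.toFun t, mem_sphere_zero_iff_norm.mpr (c.norm_one t)⟩

/-- The planar curve obtained from `c` by deleting the point `v ∈ S²` not on `c`
(stereographic projection from `v`). -/
def proj (c : SphericalCurve) (v : Metric.sphere (0 : EuclideanSpace ℝ (Fin 3)) 1) :
    ℝ → EuclideanSpace ℝ (Fin 2) :=
  haveI : Fact (Module.finrank ℝ (EuclideanSpace ℝ (Fin 3)) = 2 + 1) := ⟨by simp⟩
  fun t => stereographic' 2 v (c.pt t)

/-- `c` has (spherical) Whitney number `ω ∈ ℤ/2`: the parity of the winding number of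
the planar curve obtained by deleting from `S²` a point in the complement of `c`. -/
def HasWhitney (c : SphericalCurve) (ω : ZMod 2) : Prop :=
  ∃ v : Metric.sphere (0 : EuclideanSpace ℝ (Fin 3)) 1,
    (∀ t : ℝ, c.toFun t ≠ (v : EuclideanSpace ℝ (Fin 3))) ∧
    ∃ (m : ℤ) (θ : ℝ → ℝ), Continuous θ ∧
      (∀ t : ℝ, deriv (c.proj v) t =
        ‖deriv (c.proj v) t‖ •
          ((WithLp.equiv 2 (Fin 2 → ℝ)).symm ![Real.cos (θ t), Real.sin (θ t)])) ∧
      θ 1 - θ 0 = 2 * Real.pi * (m : ℝ) ∧ ω = (m : ZMod 2)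

def IsRegHomotopy (f g : ℝ → EuclideanSpace ℝ (Fin 3))
    (H : ℝ → ℝ → EuclideanSpace ℝ (Fin 3)) : Prop :=
  (Continuous fun q : ℝ × ℝ => H q.1 q.2) ∧
  (Continuous fun q : ℝ × ℝ => deriv (H q.1) q.2) ∧
  (∀ s t : ℝ, ‖H s t‖ = 1) ∧
  (∀ s : ℝ, Function.Periodic (H s) 1) ∧
  (∀ s : ℝ, ContDiff ℝ (⊤ : ℕ∞) (H s)) ∧
  (∀ s t : ℝ, deriv (H s) t ≠ 0) ∧
  H 0 = f ∧ H 1 = g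

def RegularlyHomotopic (c c' : SphericalCurve) : Prop :=
  ∃ H, IsRegHomotopy c.toFun c'.toFun H

def StablyHomotopic (c c' : SphericalCurve) : Prop :=
  ∃ H, IsRegHomotopy c.toFun c'.toFun H ∧ ∀ s ∈ Set.Icc (0:ℝ) 1, StableF (H s)

def StablePointF (f : ℝ → EuclideanSpace ℝ (Fin 3)) (p : EuclideanSpace ℝ (Fin 3)) : Prop :=
  multF f p ≤ 1 ∨ (multF f p = 2 ∧ TransverseF f p)

def JSingF (f : ℝ → EuclideanSpace ℝ (Fin 3)) : Prop :=
  ∃ p : EuclideanSpace ℝ (Fin 3), multF f p = 2 ∧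
    (∀ s ∈ Set.Ico (0:ℝ) 1, ∀ t ∈ Set.Ico (0:ℝ) 1, s ≠ t → f s = p → f t = p →
      ∃ r : ℝ, r ≠ 0 ∧ deriv f t = r • deriv f s ∧
        det3 p (deriv f s) (iteratedDeriv 2 f s) * ‖deriv f t‖ ^ 3 ≠
          (if 0 < r then 1 else -1) * det3 p (deriv f t) (iteratedDeriv 2 f t) * ‖deriv f s‖ ^ 3) ∧
    (∀ q, q ≠ p → StablePointF f q) ∧ (crossingSetF f).Finite

def SSingF (f : ℝ → EuclideanSpace ℝ (Fin 3)) : Prop :=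
  ∃ p : EuclideanSpace ℝ (Fin 3), multF f p = 3 ∧ TransverseF f p ∧
    (∀ q, q ≠ p → StablePointF f q) ∧ (crossingSetF f).Finite

def JMove (c c' : SphericalCurve) : Prop :=
  c.Stable ∧ c'.Stable ∧ ∃ H, IsRegHomotopy c.toFun c'.toFun H ∧
    ∃ s₀ ∈ Set.Ioo (0:ℝ) 1, (∀ s ∈ Set.Icc (0:ℝ) 1, s ≠ s₀ → StableF (H s)) ∧ JSingF (H s₀)

def SMove (c c' : SphericalCurve) : Prop :=
  c.Stable ∧ c'.Stable ∧ ∃ H, IsRegHomotopy c.toFun c'.toFun H ∧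
    ∃ s₀ ∈ Set.Ioo (0:ℝ) 1, (∀ s ∈ Set.Icc (0:ℝ) 1, s ≠ s₀ → StableF (H s)) ∧ SSingF (H s₀)

def BasicMove (c c' : SphericalCurve) : Prop := JMove c c' ∨ SMove c c'

def IncreasingJMove (c c' : SphericalCurve) : Prop :=
  JMove c c' ∧ c'.crossings = c.crossings + 2

def DecreasingJMove (c c' : SphericalCurve) : Prop :=
  JMove c c' ∧ c.crossings = c'.crossings + 2

def ZMove (c c' : SphericalCurve) : Prop :=
  ∃ c₁ c₂, IncreasingJMove c c₁ ∧ SMove c₁ c₂ ∧ DecreasingJMove c₂ c'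

def ChainFromTo (c c' : SphericalCurve) (seq : ℕ → SphericalCurve) (k : ℕ) : Prop :=
  StablyHomotopic c (seq 0) ∧ seq k = c' ∧ ∀ i < k, BasicMove (seq i) (seq (i+1))

def dist (c c' : SphericalCurve) : ℕ∞ :=
  sInf {m : ℕ∞ | ∃ k : ℕ, m = (k : ℕ∞) ∧ ∃ seq : ℕ → SphericalCurve, ChainFromTo c c' seq k}

def diam (A : Set SphericalCurve) : ℕ∞ := ⨆ c ∈ A, ⨆ c' ∈ A, dist c c'

def B (ω : ZMod 2) (n : ℕ) : Set SphericalCurve :=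
  {c : SphericalCurve | c.Stable ∧ c.HasWhitney ω ∧ c.crossings ≤ n}

def AlgStep (N : ℕ) (c c' : SphericalCurve) (w : ℕ) : Prop :=
  (SMove c c' ∧ w = 1) ∨ (DecreasingJMove c c' ∧ w = 1) ∨
  ((∃ c₁ c₂, IncreasingJMove c c₁ ∧ SMove c₁ c₂ ∧ DecreasingJMove c₂ c' ∧
      c₁.crossings ≤ N ∧ c₂.crossings ≤ N) ∧ w = 3)

/-! #### The invariant `f^X` for spherical curves -/

def crossingPairsF (f : ℝ → EuclideanSpace ℝ (Fin 3)) : Set (ℝ × ℝ) :=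
  {q : ℝ × ℝ | q.1 ∈ Set.Ico (0:ℝ) 1 ∧ q.2 ∈ Set.Ico (0:ℝ) 1 ∧ q.1 < q.2 ∧ f q.1 = f q.2}

def crossSign (f : ℝ → EuclideanSpace ℝ (Fin 3)) (s t : ℝ) : ℤ :=
  if 0 < det3 (f s) (deriv f s) (deriv f t) then 1 else -1

def arcIndex (f : ℝ → EuclideanSpace ℝ (Fin 3)) (α β : ℝ) : ℤ :=
  ∑ᶠ q ∈ {q : ℝ × ℝ | q.1 ∈ Set.Ioo α β ∧ q.2 ∈ Set.Ioo α β ∧ q.1 < q.2 ∧ f q.1 = f q.2},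
    crossSign f q.1 q.2

def fX (c : SphericalCurve) : FreeAbelianGroup (ℤ × ℤ) :=
  ∑ᶠ q ∈ crossingPairsF c.toFun,
    if 0 < det3 (c.toFun q.1) (deriv c.toFun q.1) (deriv c.toFun q.2) then
      FreeAbelianGroup.of (arcIndex c.toFun q.1 q.2, arcIndex c.toFun q.2 (q.1 + 1))
    else
      FreeAbelianGroup.of (arcIndex c.toFun q.2 (q.1 + 1), arcIndex c.toFun q.1 q.2)

def g (c : SphericalCurve) : ℤ := phi (fX c)

/-- Inverse stereographic projection `ℂ → S²` from the north pole. -/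
def stereoInv (z : ℂ) : EuclideanSpace ℝ (Fin 3) :=
  (WithLp.equiv 2 (Fin 3 → ℝ)).symm
    ![2 * z.re / (Complex.normSq z + 1), 2 * z.im / (Complex.normSq z + 1),
      (Complex.normSq z - 1) / (Complex.normSq z + 1)]

/-- The standard spherical curves `δ_0` (one crossing) and `δ_1` (embedded):
the images in `S²` of the standard planar curves `δ_0`, `δ_1`. -/
def deltaFun (ω : ZMod 2) : ℝ → EuclideanSpace ℝ (Fin 3) :=
  fun t => stereoInv (PlanarCurve.deltaFun (if ω = 0 then 0 else 1) t)

end SphericalCurve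


/-- The determinant of two vectors in `ℝ × ℝ`. -/
def det2P (u v : ℝ × ℝ) : ℝ := u.1 * v.2 - u.2 * v.1

/-- The closed region bounded by a subset of the plane: the set together with all the
bounded connected components of its complement. -/
def closedRegion (S : Set ℂ) : Set ℂ :=
  S ∪ {p : ℂ | p ∉ S ∧ Bornology.IsBounded (connectedComponentIn Sᶜ p)}

/-! ### Auxiliary: abstract computation from the list of crossing pairs -/

namespace Aux

lemma det2_anti (u v : ℂ) : det2 v u = - det2 u v := by unfold det2; ring

lemma deriv_periodic {f : ℝ → ℂ} (hper : Function.Periodic f 1) :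
    Function.Periodic (deriv f) 1 := by
  intro x
  have h := deriv_comp_add_const f 1 x
  have : (fun x => f (x + 1)) = f := funext hper
  rw [this] at h
  exact h.symm

section abstr

variable {ι : Type} [Fintype ι] [DecidableEq ι] {f : ℝ → ℂ} {q : ι → ℝ × ℝ}

lemma mem_iff (hC : PlanarCurve.crossingPairsF f = Set.range q) (s t : ℝ) :
    (0 ≤ s ∧ s < t ∧ t < 1 ∧ f s = f t) ↔ ∃ i, q i = (s, t) := by
  have : ((s, t) ∈ PlanarCurve.crossingPairsF f) ↔ (s, t) ∈ Set.range q := by rw [hC]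
  simp only [PlanarCurve.crossingPairsF, Set.mem_setOf_eq, Set.mem_Ico, Set.mem_range] at this
  rw [← this]
  constructor
  · rintro ⟨h1, h2, h3, h4⟩
    exact ⟨⟨h1, by linarith⟩, ⟨by linarith, h3⟩, h2, h4⟩
  · rintro ⟨h1, h2, h3, h4⟩
    exact ⟨h1.1, h3, h2.2, h4⟩

lemma q_spec (hC : PlanarCurve.crossingPairsF f = Set.range q) (i : ι) :
    0 ≤ (q i).1 ∧ (q i).1 < (q i).2 ∧ (q i).2 < 1 ∧ f (q i).1 = f (q i).2 :=
  (mem_iff hC _ _).2 ⟨i, rfl⟩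

lemma sum_set (h : ι → ℤ) (S : Set ι) [DecidablePred (· ∈ S)] :
    ∑ᶠ i ∈ S, h i = ∑ i, if i ∈ S then h i else 0 := by
  rw [finsum_mem_def, finsum_eq_sum_of_fintype]
  refine Finset.sum_congr rfl fun i _ => ?_
  by_cases hi : i ∈ S <;> simp [hi]

lemma arc1 (hC : PlanarCurve.crossingPairsF f = Set.range q) (hinj : Function.Injective q)
    (hpos : ∀ i, 0 < det2 (deriv f (q i).1) (deriv f (q i).2))
    (α β : ℝ) (hα : 0 ≤ α) (hβ : β < 1) :
    PlanarCurve.arcIndex f α β = ∑ i, if α < (q i).1 ∧ (q i).2 < β then 1 else 0 := by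
  classical
  have hS : {p : ℝ × ℝ | p.1 ∈ Set.Ioo α β ∧ p.2 ∈ Set.Ioo α β ∧ p.1 < p.2 ∧ f p.1 = f p.2}
      = q '' {i | α < (q i).1 ∧ (q i).2 < β} := by
    ext ⟨s, t⟩
    simp only [Set.mem_setOf_eq, Set.mem_Ioo, Set.mem_image]
    constructor
    · rintro ⟨h1, h2, h3, h4⟩
      obtain ⟨i, hi⟩ := (mem_iff hC s t).1 ⟨by linarith, h3, by linarith, h4⟩
      exact ⟨i, by rw [hi]; exact ⟨h1.1, h2.2⟩, hi⟩
    · rintro ⟨i, h1, h2⟩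
      have := q_spec hC i
      rw [h2] at this h1
      simp only at this h1
      refine ⟨⟨?_, ?_⟩, ⟨?_, ?_⟩, ?_, this.2.2.2⟩ <;> linarith
  unfold PlanarCurve.arcIndex
  rw [hS, finsum_mem_image hinj.injOn, sum_set]
  refine Finset.sum_congr rfl fun i _ => ?_
  simp only [Set.mem_setOf_eq, PlanarCurve.crossSign, if_pos (hpos i)]

lemma arc2 (hper : Function.Periodic f 1)
    (hC : PlanarCurve.crossingPairsF f = Set.range q) (hinj : Function.Injective q)
    (hpos : ∀ i, 0 < det2 (deriv f (q i).1) (deriv f (q i).2))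
    (α β : ℝ) (hα : 0 ≤ α) (hαβ : α < β) (hβ : β < 1) :
    PlanarCurve.arcIndex f β (α + 1) =
      ∑ i, if β < (q i).1 ∨ (q i).2 < α then 1 else
        if (q i).1 < α ∧ β < (q i).2 then -1 else 0 := by
  classical
  let S : Set ι := {i | β < (q i).1 ∨ (q i).2 < α ∨ ((q i).1 < α ∧ β < (q i).2)}
  let r : ι → ℝ × ℝ := fun i => if β < (q i).1 then q i else
    if (q i).2 < α then ((q i).1 + 1, (q i).2 + 1) else ((q i).2, (q i).1 + 1)
  have hS : {p : ℝ × ℝ | p.1 ∈ Set.Ioo β (α + 1) ∧ p.2 ∈ Set.Ioo β (α + 1) ∧ p.1 < p.2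
      ∧ f p.1 = f p.2} = r '' S := by
    ext ⟨s, t⟩
    simp only [Set.mem_setOf_eq, Set.mem_Ioo, Set.mem_image]
    constructor
    · rintro ⟨h1, h2, h3, h4⟩
      rcases lt_or_ge t 1 with ht | ht
      · obtain ⟨i, hi⟩ := (mem_iff hC s t).1 ⟨by linarith, h3, by linarith, h4⟩
        refine ⟨i, Or.inl (by rw [hi]; exact h1.1), ?_⟩
        simp only [r, hi, if_pos h1.1]
      · have ht' : f t = f (t - 1) := by rw [hper.sub_eq]
        rcases lt_or_ge s 1 with hs | hs
        · obtain ⟨i, hi⟩ := (mem_iff hC (t - 1) s).1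
            ⟨by linarith, by linarith, by linarith, by rw [h4, ht']⟩
          refine ⟨i, Or.inr (Or.inr (by rw [hi]; constructor <;> simp only <;> linarith)), ?_⟩
          simp only [r, hi]
          rw [if_neg (by linarith), if_neg (by linarith)]
          simp
        · have hs' : f s = f (s - 1) := by rw [hper.sub_eq]
          obtain ⟨i, hi⟩ := (mem_iff hC (s - 1) (t - 1)).1
            ⟨by linarith, by linarith, by linarith, by rw [← hs', h4, ht']⟩
          refine ⟨i, Or.inr (Or.inl (by rw [hi]; simp only; linarith)), ?_⟩
          simp only [r, hi]
          rw [if_neg (by linarith), if_pos (by linarith)]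
          simp
    · rintro ⟨i, h1, h2⟩
      have h := q_spec hC i
      have hp1 := hper (q i).1
      have hp2 := hper (q i).2
      simp only [S, Set.mem_setOf_eq] at h1
      simp only [r] at h2
      split_ifs at h2 with c1 c2
      · rw [h2] at h c1; simp only at h c1
        refine ⟨⟨?_, ?_⟩, ⟨?_, ?_⟩, ?_, h.2.2.2⟩ <;> linarith
      · obtain ⟨rfl, rfl⟩ := Prod.mk.inj h2
        refine ⟨⟨?_, ?_⟩, ⟨?_, ?_⟩, ?_, by rw [hp1, hp2, h.2.2.2]⟩ <;> linarith
      · obtain ⟨rfl, rfl⟩ := Prod.mk.inj h2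
        have h1 := (h1.resolve_left c1).resolve_left c2
        refine ⟨⟨?_, ?_⟩, ⟨?_, ?_⟩, ?_, by rw [hp1, h.2.2.2]⟩ <;> linarith [h1.1, h1.2]
  have hr : Set.InjOn r S := by
    intro i hi j hj hij
    have h := q_spec hC i
    have h' := q_spec hC j
    simp only [S, Set.mem_setOf_eq] at hi hj
    simp only [r] at hij
    apply hinj
    split_ifs at hij with c1 c2 c3 c4 c5 c6 c7 c8
    · exact hij
    all_goals
      first
      | (rw [Prod.ext_iff] at hij; simp only at hij; exfalso; linarith [hij.1, hij.2])
      | (rw [Prod.ext_iff] at hij ⊢; simp only at hij; constructor <;> linarith [hij.1, hij.2])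
  unfold PlanarCurve.arcIndex
  rw [hS, finsum_mem_image hr, sum_set]
  refine Finset.sum_congr rfl fun i _ => ?_
  have h := q_spec hC i
  have hp := hpos i
  have hp1 := deriv_periodic hper (q i).1
  have hp2 := deriv_periodic hper (q i).2
  have hn : ¬ 0 < det2 (deriv f (q i).2) (deriv f (q i).1) := by
    rw [det2_anti]; linarith
  by_cases c1 : β < (q i).1
  · simp [S, r, c1, PlanarCurve.crossSign, hp]
  · by_cases c2 : (q i).2 < α
    · simp [S, r, c1, c2, PlanarCurve.crossSign, hp1, hp2, hp]
    · simp [S, r, c1, c2, PlanarCurve.crossSign, hp1, hn]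

lemma three (hC : PlanarCurve.crossingPairsF f = Set.range q)
    (hdis : ∀ i j, (q i).2 ≠ (q j).1) {a b c : ℝ} (ha : a ∈ Set.Ico (0:ℝ) 1)
    (hc : c ∈ Set.Ico (0:ℝ) 1) (hab : a < b) (hbc : b < c) (h1 : f a = f b) (h2 : f b = f c) :
    False := by
  obtain ⟨i, hi⟩ := (mem_iff hC a b).1 ⟨ha.1, hab, hbc.trans hc.2, h1⟩
  obtain ⟨j, hj⟩ := (mem_iff hC b c).1 ⟨ha.1.trans hab.le, hbc, hc.2, h2⟩
  exact hdis i j (by rw [hi, hj])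

lemma fiber (hC : PlanarCurve.crossingPairsF f = Set.range q)
    (hdis : ∀ i j, (q i).2 ≠ (q j).1) (i : ι) (p : ℂ) (hp : f (q i).1 = p) :
    {t ∈ Set.Ico (0:ℝ) 1 | f t = p} = {(q i).1, (q i).2} := by
  have h := q_spec hC i
  ext t
  simp only [Set.mem_setOf_eq, Set.mem_insert_iff, Set.mem_singleton_iff]
  constructor
  · rintro ⟨ht, hf⟩
    by_contra hne
    push Not at hne
    rcases lt_or_gt_of_ne hne.1 with h1 | h1
    · exact three hC hdis ht ⟨by linarith, h.2.2.1⟩ h1 h.2.1 (by rw [hf, hp]) h.2.2.2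
    · rcases lt_or_gt_of_ne hne.2 with h2 | h2
      · exact three hC hdis ⟨h.1, by linarith⟩ ⟨by linarith, h.2.2.1⟩ h1 h2 (by rw [hf, hp])
          (by rw [hf, ← h.2.2.2, hp])
      · exact three hC hdis ⟨h.1, by linarith⟩ ht h.2.1 h2 h.2.2.2 (by rw [hf, ← h.2.2.2, hp])
  · rintro (rfl | rfl)
    · exact ⟨⟨h.1, by linarith⟩, hp⟩
    · exact ⟨⟨by linarith, h.2.2.1⟩, by rw [← h.2.2.2, hp]⟩

lemma mult_dich (hC : PlanarCurve.crossingPairsF f = Set.range q)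
    (hdis : ∀ i j, (q i).2 ≠ (q j).1) (p : ℂ) :
    (∃ i, f (q i).1 = p ∧ PlanarCurve.multF f p = 2) ∨
      ((¬ ∃ i, f (q i).1 = p) ∧ PlanarCurve.multF f p ≤ 1) := by
  by_cases hi : ∃ i, f (q i).1 = p
  · obtain ⟨i, hi⟩ := hi
    left
    refine ⟨i, hi, ?_⟩
    unfold PlanarCurve.multF
    rw [fiber hC hdis i p hi]
    exact Set.ncard_pair (q_spec hC i).2.1.ne
  · right
    refine ⟨hi, ?_⟩
    unfold PlanarCurve.multF
    have hsub : {t ∈ Set.Ico (0:ℝ) 1 | f t = p}.Subsingleton := by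
      rintro s ⟨hs, hs'⟩ t ⟨ht, ht'⟩
      by_contra hne
      rcases lt_or_gt_of_ne hne with h | h
      · obtain ⟨i, hi'⟩ := (mem_iff hC s t).1 ⟨hs.1, h, ht.2, by rw [hs', ht']⟩
        exact hi ⟨i, by rw [hi', hs']⟩
      · obtain ⟨i, hi'⟩ := (mem_iff hC t s).1 ⟨ht.1, h, hs.2, by rw [hs', ht']⟩
        exact hi ⟨i, by rw [hi', ht']⟩
    exact (Set.ncard_le_one hsub.finite).2 (fun a ha b hb => hsub ha hb)

lemma crossingSet_eq (hC : PlanarCurve.crossingPairsF f = Set.range q)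
    (hdis : ∀ i j, (q i).2 ≠ (q j).1) :
    PlanarCurve.crossingSetF f = Set.range (fun i => f (q i).1) := by
  ext p
  simp only [PlanarCurve.crossingSetF, Set.mem_setOf_eq, Set.mem_range]
  rcases mult_dich hC hdis p with ⟨i, hi, hm⟩ | ⟨hi, hm⟩
  · exact ⟨fun _ => ⟨i, hi⟩, fun _ => hm.ge⟩
  · exact ⟨fun h => by omega, fun h => absurd h hi⟩

lemma fq_inj (hC : PlanarCurve.crossingPairsF f = Set.range q) (hinj : Function.Injective q)
    (hdis : ∀ i j, (q i).2 ≠ (q j).1) : Function.Injective (fun i => f (q i).1) := by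
  intro i j hij
  simp only at hij
  have h1 := fiber hC hdis i _ rfl
  have h2 := fiber hC hdis j _ hij.symm
  rw [h1] at h2
  have hi := q_spec hC i
  have hj := q_spec hC j
  have m1 : (q i).1 ∈ ({(q j).1, (q j).2} : Set ℝ) := by rw [← h2]; simp
  have m2 : (q i).2 ∈ ({(q j).1, (q j).2} : Set ℝ) := by rw [← h2]; simp
  simp only [Set.mem_insert_iff, Set.mem_singleton_iff] at m1 m2
  have e1 : (q i).1 = (q j).1 := m1.resolve_right (fun h => hdis j i h.symm)
  have e2 : (q i).2 = (q j).2 := m2.resolve_left (fun h => hdis i j h)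
  exact hinj (Prod.ext e1 e2)

lemma stable (hC : PlanarCurve.crossingPairsF f = Set.range q)
    (hpos : ∀ i, 0 < det2 (deriv f (q i).1) (deriv f (q i).2))
    (hdis : ∀ i j, (q i).2 ≠ (q j).1) : PlanarCurve.StableF f := by
  refine ⟨by rw [crossingSet_eq hC hdis]; exact Set.finite_range _, fun p => ⟨?_, ?_⟩⟩
  · rcases mult_dich hC hdis p with ⟨i, hi, hm⟩ | ⟨hi, hm⟩ <;> omega
  · intro _ s hs t ht hst hfs hft
    rcases lt_or_gt_of_ne hst with h | h
    · obtain ⟨i, hi⟩ := (mem_iff hC s t).1 ⟨hs.1, h, ht.2, by rw [hfs, hft]⟩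
      have := hpos i
      rw [hi] at this
      exact this.ne'
    · obtain ⟨i, hi⟩ := (mem_iff hC t s).1 ⟨ht.1, h, hs.2, by rw [hfs, hft]⟩
      have := hpos i
      rw [hi] at this
      rw [det2_anti]
      exact (neg_neg_of_pos this).ne

lemma crossings_eq (hC : PlanarCurve.crossingPairsF f = Set.range q)
    (hinj : Function.Injective q)
    (hdis : ∀ i j, (q i).2 ≠ (q j).1) :
    (PlanarCurve.crossingSetF f).ncard = Fintype.card ι := by
  rw [crossingSet_eq hC hdis, ← Set.image_univ,
    Set.ncard_image_of_injective _ (fq_inj hC hinj hdis), Set.ncard_univ, Nat.card_eq_fintype_card]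

lemma fX_eq (c : PlanarCurve) (hC : PlanarCurve.crossingPairsF c.toFun = Set.range q)
    (hinj : Function.Injective q)
    (hpos : ∀ i, 0 < det2 (deriv c.toFun (q i).1) (deriv c.toFun (q i).2)) :
    c.fX = ∑ i, FreeAbelianGroup.of
      ((∑ j, if (q i).1 < (q j).1 ∧ (q j).2 < (q i).2 then 1 else 0 : ℤ),
       (∑ j, if (q i).2 < (q j).1 ∨ (q j).2 < (q i).1 then 1 else
        if (q j).1 < (q i).1 ∧ (q i).2 < (q j).2 then -1 else 0 : ℤ)) := by
  unfold PlanarCurve.fX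
  rw [hC, finsum_mem_range hinj, finsum_eq_sum_of_fintype]
  refine Finset.sum_congr rfl fun i _ => ?_
  have h := q_spec hC i
  rw [if_pos (hpos i), arc1 hC hinj hpos _ _ h.1 h.2.2.1,
    arc2 c.periodic hC hinj hpos _ _ h.1 h.2.1 h.2.2.1]

end abstr

/-! ### Auxiliary: periodic bump functions -/

open Real in
/-- A smooth 1-periodic bump supported on `[-w, w]` modulo 1. -/
def bp (w x : ℝ) : ℝ := expNegInvGlue (cos (2 * π * x) - cos (2 * π * w))

open Real in
/-- The derivative of `bp w`. -/
def bpd (w x : ℝ) : ℝ :=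
  deriv expNegInvGlue (cos (2 * π * x) - cos (2 * π * w)) * (-sin (2 * π * x) * (2 * π))

section bumps
open Real

lemma E_hasDeriv (y : ℝ) : HasDerivAt expNegInvGlue (deriv expNegInvGlue y) y :=
  (((expNegInvGlue.contDiff (n := 1)).differentiable (by norm_num)) y).hasDerivAt

lemma E_deriv_nonpos {y : ℝ} (hy : y ≤ 0) : deriv expNegInvGlue y = 0 := by
  apply IsLocalMin.deriv_eq_zero
  refine Filter.Eventually.of_forall fun z => ?_
  rw [expNegInvGlue.zero_of_nonpos hy]
  exact expNegInvGlue.nonneg z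

lemma E_deriv_pos {y : ℝ} (hy : 0 < y) : 0 < deriv expNegInvGlue y := by
  have h1 : HasDerivAt (fun x : ℝ => exp (-x⁻¹)) (exp (-y⁻¹) * (-(-(y ^ 2)⁻¹))) y :=
    ((hasDerivAt_inv hy.ne').neg).exp
  have h2 : expNegInvGlue =ᶠ[nhds y] fun x : ℝ => exp (-x⁻¹) := by
    filter_upwards [lt_mem_nhds hy] with x hx
    simp [expNegInvGlue, not_le.2 hx]
  rw [(h1.congr_of_eventuallyEq h2).deriv, neg_neg]
  positivity

lemma E_strict : StrictMonoOn expNegInvGlue (Set.Ici 0) := by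
  apply strictMonoOn_of_deriv_pos (convex_Ici 0) (expNegInvGlue.contDiff (n := 0)).continuous.continuousOn
  intro x hx
  rw [interior_Ici] at hx
  exact E_deriv_pos hx

lemma bp_contDiff (w : ℝ) : ContDiff ℝ (⊤ : ℕ∞) (bp w) := by
  unfold bp
  have h : ContDiff ℝ (⊤ : ℕ∞) (fun x : ℝ => cos (2 * π * x) - cos (2 * π * w)) := by fun_prop
  exact (expNegInvGlue.contDiff (n := ⊤)).comp h

lemma bp_hasDeriv (w x : ℝ) : HasDerivAt (bp w) (bpd w x) x := by
  have h : HasDerivAt (fun x : ℝ => cos (2 * π * x) - cos (2 * π * w))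
      (-sin (2 * π * x) * (2 * π)) x := by
    have h0 : HasDerivAt (fun x : ℝ => 2 * π * x) (2 * π) x := by
      simpa using (hasDerivAt_id x).const_mul (2 * π)
    exact h0.cos.sub_const _
  exact (E_hasDeriv _).comp x h

lemma bpd_cont (w : ℝ) : Continuous (bpd w) := by
  unfold bpd
  have h : Continuous (deriv expNegInvGlue) :=
    (expNegInvGlue.contDiff (n := 1)).continuous_deriv (by norm_num)
  fun_prop

lemma bp_per (w x : ℝ) : bp w (x + 1) = bp w x := by
  unfold bp; rw [mul_add, mul_one, cos_add_two_pi]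

lemma bpd_per (w x : ℝ) : bpd w (x + 1) = bpd w x := by
  unfold bpd; rw [mul_add, mul_one, cos_add_two_pi, sin_add_two_pi]

lemma bp_neg (w x : ℝ) : bp w (-x) = bp w x := by
  unfold bp; rw [mul_neg, cos_neg]

lemma bpd_neg (w x : ℝ) : bpd w (-x) = - bpd w x := by
  unfold bpd; rw [mul_neg, cos_neg, sin_neg]; ring

lemma bp_abs (w x : ℝ) : bp w |x| = bp w x := by
  rcases abs_choice x with h | h <;> rw [h]
  exact bp_neg w x

lemma cos_lt {x y : ℝ} (hx : 0 ≤ x) (hxy : x < y) (hy : y ≤ 1 / 2) :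
    cos (2 * π * y) < cos (2 * π * x) := by
  have := pi_pos
  apply cos_lt_cos_of_nonneg_of_le_pi <;> nlinarith

lemma cos_le {w x : ℝ} (hw : 0 ≤ w) (h1 : w ≤ |x|) (h2 : |x| ≤ 1 - w) :
    cos (2 * π * x) ≤ cos (2 * π * w) := by
  have e : cos (2 * π * x) = cos (2 * π * |x|) := by
    rcases abs_choice x with h | h <;> rw [h]
    rw [mul_neg, cos_neg]
  rw [e]
  rcases le_or_gt |x| (1 / 2) with h | h
  · rcases h1.eq_or_lt with h1 | h1
    · rw [← h1]
    · exact (cos_lt hw h1 h).le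
  · have e2 : cos (2 * π * |x|) = cos (2 * π * (1 - |x|)) := by
      rw [mul_sub, mul_one, cos_two_pi_sub]
    rw [e2]
    have h3 : w ≤ 1 - |x| := by linarith
    rcases h3.eq_or_lt with h1 | h1
    · rw [← h1]
    · exact (cos_lt hw h1 (by linarith)).le

lemma bp_zero {w x : ℝ} (hw : 0 ≤ w) (h1 : w ≤ |x|) (h2 : |x| ≤ 1 - w) : bp w x = 0 :=
  expNegInvGlue.zero_of_nonpos (sub_nonpos.2 (cos_le hw h1 h2))

lemma bpd_zero {w x : ℝ} (hw : 0 ≤ w) (h1 : w ≤ |x|) (h2 : |x| ≤ 1 - w) : bpd w x = 0 := by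
  unfold bpd
  rw [E_deriv_nonpos (sub_nonpos.2 (cos_le hw h1 h2)), zero_mul]

lemma bp_strict {w x y : ℝ} (hx : 0 ≤ x) (hxy : x < y) (hy : y ≤ w) (hw : w ≤ 1 / 2) :
    bp w y < bp w x := by
  have h1 := cos_lt hx hxy (hy.trans hw)
  have h2 : cos (2 * π * w) ≤ cos (2 * π * y) := by
    rcases hy.eq_or_lt with h | h
    · rw [h]
    · exact (cos_lt (by linarith) h hw).le
  exact E_strict (Set.mem_Ici.2 (by linarith)) (Set.mem_Ici.2 (by linarith)) (by linarith)

lemma bp_pos {w x : ℝ} (hx : |x| < w) (hw : w ≤ 1 / 2) : 0 < bp w x := by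
  rw [← bp_abs]
  exact expNegInvGlue.pos_of_pos (sub_pos.2 (cos_lt (abs_nonneg x) hx hw))

lemma bp_inj {w x y : ℝ} (hw : w ≤ 1 / 2) (hx : |x| < w) (hy : |y| < w) (h : bp w x = bp w y) :
    |x| = |y| := by
  rw [← bp_abs w x, ← bp_abs w y] at h
  rcases lt_trichotomy |x| |y| with h1 | h1 | h1
  · exact absurd h (bp_strict (abs_nonneg _) h1 hy.le hw).ne'
  · exact h1
  · exact absurd h (bp_strict (abs_nonneg _) h1 hx.le hw).ne

lemma bpd_lt {w x : ℝ} (hx : 0 < x) (hxw : x < w) (hw : w ≤ 1 / 2) : bpd w x < 0 := by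
  unfold bpd
  have h1 := E_deriv_pos (sub_pos.2 (cos_lt hx.le hxw hw))
  have h2 : 0 < sin (2 * π * x) := by
    have := pi_pos
    apply sin_pos_of_pos_of_lt_pi
    · positivity
    · nlinarith
  have := pi_pos
  have h3 : 0 < sin (2 * π * x) * (2 * π) := by positivity
  nlinarith

lemma bpd_gt {w x : ℝ} (hx : x < 0) (hxw : -w < x) (hw : w ≤ 1 / 2) : 0 < bpd w x := by
  have := bpd_lt (w := w) (x := -x) (by linarith) (by linarith) hw
  rw [bpd_neg] at this
  linarith

lemma bpd_at_zero (w : ℝ) : bpd w 0 = 0 := by simp [bpd]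

lemma sin_ratio {x y : ℝ} (hx : 0 < x) (hxy : x < y) (hy : y ≤ π) : x * sin y < y * sin x := by
  have hy1 : 0 < y := by linarith
  have hc1 : 0 < 1 - x / y := by
    have : x / y < 1 := (div_lt_one hy1).2 hxy
    linarith
  have hc2 : 0 < x / y := by positivity
  have m0 : (0:ℝ) ∈ Set.Icc 0 π := ⟨le_rfl, pi_pos.le⟩
  have m1 : y ∈ Set.Icc 0 π := ⟨by linarith, hy⟩
  have h := strictConcaveOn_sin_Icc.2 m0 m1 hy1.ne hc1 hc2 (by ring)
  have hy0 : 0 < y := by linarith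
  simp only [smul_eq_mul, mul_zero, sin_zero, zero_add] at h
  rw [div_mul_cancel₀ _ hy0.ne', div_mul_eq_mul_div, div_lt_iff₀ hy0] at h
  linarith

end bumps

/-! ### Auxiliary: constants -/

open Real in
def Kk (k : ℕ) : ℝ := 2 * π * (k + 1)
def eta (k : ℕ) : ℝ := 1 / (4 * (k + 1))
def w0 (k : ℕ) : ℝ := 1 / 2 - eta k
def ep (k l : ℕ) : ℝ := eta k / l
def cc (k l j : ℕ) : ℝ := w0 k + (2 * j + 1) * ep k l
open Real in
def AA (k l : ℕ) : ℝ := Kk k * ep k l / (bp (ep k l) 0 * sin (2 * π * ep k l))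
open Real in
def xx (k l : ℕ) (u : ℝ) : ℝ := Kk k * u - AA k l * (bp (ep k l) u * sin (2 * π * u))
open Real in
def xxd (k l : ℕ) (u : ℝ) : ℝ :=
  Kk k - AA k l * (bpd (ep k l) u * sin (2 * π * u) + bp (ep k l) u * (cos (2 * π * u) * (2 * π)))
def rho (k l : ℕ) (t : ℝ) : ℝ := -bp (w0 k) t + ∑ j ∈ Finset.range l, bp (ep k l) (t - cc k l j)
def rd (k l : ℕ) (t : ℝ) : ℝ := -bpd (w0 k) t + ∑ j ∈ Finset.range l, bpd (ep k l) (t - cc k l j)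
open Real in
def th (k l : ℕ) (t : ℝ) : ℝ := Kk k * t - AA k l * ∑ j ∈ Finset.range l,
  bp (ep k l) (t - cc k l j) * sin (2 * π * (t - cc k l j))
open Real in
def td (k l : ℕ) (t : ℝ) : ℝ := Kk k - AA k l * ∑ j ∈ Finset.range l,
  (bpd (ep k l) (t - cc k l j) * sin (2 * π * (t - cc k l j)) +
    bp (ep k l) (t - cc k l j) * (cos (2 * π * (t - cc k l j)) * (2 * π)))
def ff (k l : ℕ) (t : ℝ) : ℂ := Complex.exp ((rho k l t : ℂ) + (th k l t : ℂ) * Complex.I)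

section consts
open Real
variable {k l : ℕ}

lemma Kk_pos (k : ℕ) : 0 < Kk k := by unfold Kk; have := pi_pos; positivity
lemma eta_pos (k : ℕ) : 0 < eta k := by unfold eta; positivity
lemma eta_eq (k : ℕ) : eta k * (4 * (k + 1)) = 1 := by
  unfold eta; field_simp
lemma eta_le (k : ℕ) : eta k ≤ 1 / 4 := by
  have h := eta_eq k; have := eta_pos k
  have : (0:ℝ) ≤ k := by positivity
  nlinarith
lemma ep_eq (hl : 1 ≤ l) : l * ep k l = eta k := by
  unfold ep; have : (l:ℝ) ≠ 0 := by positivity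
  field_simp
lemma ep_pos (hl : 1 ≤ l) : 0 < ep k l := by
  unfold ep; have := eta_pos k; positivity
lemma ep_le (hl : 1 ≤ l) : ep k l ≤ 1 / 4 := by
  have h1 := ep_eq (k := k) hl
  have h2 := ep_pos (k := k) hl
  have h3 := eta_le k
  have : (1:ℝ) ≤ l := by exact_mod_cast hl
  nlinarith
lemma w0_ge (k : ℕ) : 1 / 4 ≤ w0 k := by unfold w0; linarith [eta_le k]
lemma w0_lt (k : ℕ) : w0 k < 1 / 2 := by unfold w0; linarith [eta_pos k]
lemma cc_ge (hl : 1 ≤ l) (j : ℕ) : w0 k + ep k l ≤ cc k l j := by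
  unfold cc; have := ep_pos (k := k) hl
  have : (0:ℝ) ≤ j := by positivity
  nlinarith
lemma cc_le (hl : 1 ≤ l) {j : ℕ} (hj : j < l) : cc k l j + ep k l ≤ 1 - w0 k := by
  have h := ep_pos (k := k) hl
  have h1 := ep_eq (k := k) hl
  have : (j:ℝ) + 1 ≤ l := by exact_mod_cast hj
  have : ((j:ℝ) + 1) * ep k l ≤ l * ep k l := by gcongr
  unfold cc w0
  linarith
lemma cc_lt (hl : 1 ≤ l) {i j : ℕ} (hij : i < j) : cc k l i + ep k l ≤ cc k l j - ep k l := by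
  have h := ep_pos (k := k) hl
  have : (i:ℝ) + 1 ≤ j := by exact_mod_cast hij
  have : ((i:ℝ) + 1) * ep k l ≤ j * ep k l := by gcongr
  unfold cc
  linarith

lemma sin_ep_pos (hl : 1 ≤ l) : 0 < sin (2 * π * ep k l) := by
  have := pi_pos
  have h := ep_pos (k := k) hl
  have h2 := ep_le (k := k) hl
  apply sin_pos_of_pos_of_lt_pi
  · positivity
  · nlinarith

lemma bp0_pos (hl : 1 ≤ l) : 0 < bp (ep k l) 0 :=
  bp_pos (by rw [abs_zero]; exact ep_pos hl) (by linarith [ep_le (k := k) hl])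

lemma AA_eq (hl : 1 ≤ l) : AA k l * (bp (ep k l) 0 * sin (2 * π * ep k l)) = Kk k * ep k l := by
  unfold AA
  have h1 := sin_ep_pos (k := k) hl
  have h2 := bp0_pos (k := k) hl
  exact div_mul_cancel₀ _ (mul_pos h2 h1).ne'

lemma AA_pos (hl : 1 ≤ l) : 0 < AA k l := by
  unfold AA
  have h1 := sin_ep_pos (k := k) hl
  have h2 := bp0_pos (k := k) hl
  have := ep_pos (k := k) hl
  have := Kk_pos k
  positivity

lemma xx_neg (u : ℝ) : xx k l (-u) = - xx k l u := by
  unfold xx; rw [bp_neg, mul_neg (2 * π), sin_neg]; ring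

lemma xxd_neg (u : ℝ) : xxd k l (-u) = xxd k l u := by
  unfold xxd; rw [bp_neg, bpd_neg, mul_neg (2 * π), sin_neg, cos_neg]; ring

lemma xx_zero : xx k l 0 = 0 := by simp [xx]

lemma xx_bd' (hl : 1 ≤ l) {u : ℝ} (h0 : 0 ≤ u) (hu : u < ep k l) : |xx k l u| < Kk k * ep k l := by
  have hK := Kk_pos k
  have hA := AA_pos (k := k) hl
  have he := ep_le (k := k) hl
  have hep := ep_pos (k := k) hl
  have hs := sin_ep_pos (k := k) hl
  have hb0 := bp0_pos (k := k) hl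
  have hpi := pi_pos
  have hb : 0 < bp (ep k l) u := bp_pos (by rwa [abs_of_nonneg h0]) (by linarith)
  have hsu : 0 ≤ sin (2 * π * u) := by
    apply sin_nonneg_of_nonneg_of_le_pi
    · positivity
    · nlinarith
  have hsu2 : sin (2 * π * u) < sin (2 * π * ep k l) := by
    apply sin_lt_sin_of_lt_of_le_pi_div_two <;> nlinarith
  have hb2 : bp (ep k l) u ≤ bp (ep k l) 0 := by
    rcases h0.eq_or_lt with h | h
    · rw [← h]
    · exact (bp_strict le_rfl h hu.le (by linarith)).le
  have h1 : bp (ep k l) u * sin (2 * π * u) < bp (ep k l) 0 * sin (2 * π * ep k l) := by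
    nlinarith
  have h2 : AA k l * (bp (ep k l) u * sin (2 * π * u)) < Kk k * ep k l := by
    rw [← AA_eq hl]; gcongr
  have h3 : 0 ≤ AA k l * (bp (ep k l) u * sin (2 * π * u)) := by positivity
  have h4 : Kk k * u < Kk k * ep k l := by gcongr
  have h5 : 0 ≤ Kk k * u := by positivity
  unfold xx
  rw [abs_lt]; constructor <;> linarith

lemma xx_bd (hl : 1 ≤ l) {u : ℝ} (hu : |u| < ep k l) : |xx k l u| < Kk k * ep k l := by
  have h := xx_bd' hl (abs_nonneg u) hu
  rcases abs_choice u with h1 | h1 <;> rw [h1] at h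
  · exact h
  · rwa [xx_neg, abs_neg] at h

lemma xxd_zero (hl : 1 ≤ l) : xxd k l 0 < 0 := by
  unfold xxd
  have hs := sin_ep_pos (k := k) hl
  have hep := ep_pos (k := k) hl
  have hpi := pi_pos
  have h1 : sin (2 * π * ep k l) < 2 * π * ep k l := sin_lt (by positivity)
  have hA := AA_pos (k := k) hl
  have hb0 := bp0_pos (k := k) hl
  have h2 := AA_eq (k := k) hl
  have hAb : 0 < AA k l * bp (ep k l) 0 := by positivity
  have h3 : Kk k * ep k l < AA k l * bp (ep k l) 0 * (2 * π) * ep k l := by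
    rw [← h2]; nlinarith
  have h4 : Kk k < AA k l * bp (ep k l) 0 * (2 * π) := lt_of_mul_lt_mul_right h3 hep.le
  simp only [mul_zero, sin_zero, cos_zero, one_mul, zero_add]
  linarith

lemma xx_hasDeriv (u : ℝ) : HasDerivAt (xx k l) (xxd k l u) u := by
  have h0 : HasDerivAt (fun x : ℝ => 2 * π * x) (2 * π) u := by
    simpa using (hasDerivAt_id u).const_mul (2 * π)
  have h1 : HasDerivAt (fun x : ℝ => Kk k * x) (Kk k) u := by
    simpa using (hasDerivAt_id u).const_mul (Kk k)
  exact h1.sub (((bp_hasDeriv _ u).mul h0.sin).const_mul _)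

lemma xx_zero_exists (hl : 1 ≤ l) : ∃ s, 0 < s ∧ s < ep k l ∧ xx k l s = 0 ∧ 0 < xxd k l s ∧
    ∀ u, 0 < u → u < ep k l → xx k l u = 0 → u = s := by
  have hK := Kk_pos k
  have hA := AA_pos (k := k) hl
  have he := ep_le (k := k) hl
  have hep := ep_pos (k := k) hl
  have hpi := pi_pos
  -- a negative value
  have hneg : ∃ a, 0 < a ∧ a < ep k l ∧ xx k l a < 0 := by
    have hd := xx_hasDeriv (k := k) (l := l) 0
    have h := hd.tendsto_slope_zero_right
    have h2 := h.eventually (gt_mem_nhds (xxd_zero (k := k) hl))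
    have h3 : ∀ᶠ x : ℝ in nhdsWithin 0 (Set.Ioi 0), x ∈ Set.Ioo (0:ℝ) (ep k l) :=
      Ioo_mem_nhdsGT hep
    obtain ⟨a, ha, ha'⟩ := (h2.and h3).exists
    refine ⟨a, ha'.1, ha'.2, ?_⟩
    simp only [zero_add, xx_zero, sub_zero, smul_eq_mul] at ha
    have ha1 := ha'.1
    have : 0 < a⁻¹ := by positivity
    by_contra hc
    push Not at hc
    nlinarith [mul_nonneg this.le hc]
  obtain ⟨a, ha0, ha1, hxa⟩ := hneg
  have hend : xx k l (ep k l) = Kk k * ep k l := by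
    unfold xx
    rw [bp_zero hep.le (by rw [abs_of_pos hep]) (by rw [abs_of_pos hep]; linarith)]
    ring
  have hcont : Continuous (xx k l) :=
    continuous_iff_continuousAt.2 fun u => (xx_hasDeriv u).continuousAt
  have hex : (0:ℝ) ∈ xx k l '' Set.Icc a (ep k l) := by
    apply intermediate_value_Icc ha1.le hcont.continuousOn
    refine ⟨hxa.le, ?_⟩
    rw [hend]; positivity
  obtain ⟨s, ⟨hs1, hs2⟩, hs0⟩ := hex
  have hse : s < ep k l := by
    rcases hs2.eq_or_lt with h | h
    · rw [h, hend] at hs0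
      have : 0 < Kk k * ep k l := by positivity
      linarith
    · exact h
  have hspos : 0 < s := by linarith
  have key : ∀ u v, 0 < u → u < v → v < ep k l → xx k l u = 0 → xx k l v = 0 → False := by
    intro u v hu huv hv h1 h2
    have hr := sin_ratio (x := 2 * π * u) (y := 2 * π * v) (by positivity) (by nlinarith) (by nlinarith)
    have hb := bp_strict hu.le huv hv.le (by linarith)
    have hbv : 0 < bp (ep k l) v := bp_pos (by rwa [abs_of_pos (by linarith)]) (by linarith)
    have hsu : 0 < sin (2 * π * u) := by
      apply sin_pos_of_pos_of_lt_pi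
      · positivity
      · nlinarith
    unfold xx at h1 h2
    have hr' : u * sin (2 * π * v) < v * sin (2 * π * u) := by
      have : 2 * π * (u * sin (2 * π * v)) < 2 * π * (v * sin (2 * π * u)) := by linarith
      exact lt_of_mul_lt_mul_left this (by positivity)
    -- K u v = A b(u) sin u v > A b(v) sin u v ≥ A b(v) u sin v = K u v
    have e1 : Kk k * u * v = AA k l * (bp (ep k l) u * sin (2 * π * u)) * v := by
      rw [show Kk k * u = AA k l * (bp (ep k l) u * sin (2 * π * u)) by linarith]
    have e2 : Kk k * u * v = AA k l * bp (ep k l) v * (u * sin (2 * π * v)) := by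
      have : Kk k * v = AA k l * (bp (ep k l) v * sin (2 * π * v)) := by linarith
      calc Kk k * u * v = (Kk k * v) * u := by ring
        _ = _ := by rw [this]; ring
    have i1 : AA k l * bp (ep k l) v * (u * sin (2 * π * v)) <
        AA k l * bp (ep k l) v * (v * sin (2 * π * u)) := by gcongr
    have hv0 : 0 < v := by linarith
    have i2 : AA k l * bp (ep k l) v * (v * sin (2 * π * u)) <
        AA k l * bp (ep k l) u * (v * sin (2 * π * u)) := by gcongr
    linarith
  refine ⟨s, hspos, hse, hs0, ?_, ?_⟩
  · have hsin : 0 < sin (2 * π * s) := by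
      apply sin_pos_of_pos_of_lt_pi
      · positivity
      · nlinarith
    have hbd := bpd_lt hspos hse (by linarith)
    have hy : 2 * π * s * cos (2 * π * s) < sin (2 * π * s) := by
      have h1 : 0 < cos (2 * π * s) := by
        apply cos_pos_of_mem_Ioo; constructor <;> nlinarith
      have h2 := lt_tan (x := 2 * π * s) (by positivity) (by nlinarith)
      rw [tan_eq_sin_div_cos, lt_div_iff₀ h1] at h2
      exact h2
    unfold xx at hs0
    unfold xxd
    have e : Kk k * s = AA k l * bp (ep k l) s * sin (2 * π * s) := by linarith
    have hAb : 0 < AA k l * bp (ep k l) s := by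
      have : 0 < bp (ep k l) s := bp_pos (by rwa [abs_of_pos hspos]) (by linarith)
      positivity
    have h3 : AA k l * bp (ep k l) s * (cos (2 * π * s) * (2 * π)) < Kk k := by
      have : AA k l * bp (ep k l) s * (cos (2 * π * s) * (2 * π)) * s < Kk k * s := by
        rw [e]
        have := mul_lt_mul_of_pos_left hy hAb
        linarith
      exact lt_of_mul_lt_mul_right this hspos.le
    have h4 : AA k l * (bpd (ep k l) s * sin (2 * π * s)) < 0 :=
      mul_neg_of_pos_of_neg hA (mul_neg_of_neg_of_pos hbd hsin)
    linarith
  · intro u hu hue hu0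
    rcases lt_trichotomy u s with h | h | h
    · exact (key u s hu h hse hu0 hs0).elim
    · exact h
    · exact (key s u hspos h hue hs0 hu0).elim

end consts

/-! ### Auxiliary: the curve -/

section curve
open Real
variable {k l : ℕ}

lemma rho_per (t : ℝ) : rho k l (t + 1) = rho k l t := by
  unfold rho
  simp only [add_sub_right_comm, bp_per]

lemma rd_per (t : ℝ) : rd k l (t + 1) = rd k l t := by
  unfold rd
  simp only [add_sub_right_comm, bpd_per]

lemma th_per (t : ℝ) : th k l (t + 1) = th k l t + Kk k := by
  unfold th
  simp only [add_sub_right_comm, bp_per]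
  have : ∀ x : ℝ, sin (2 * π * (x + 1)) = sin (2 * π * x) := fun x => by
    rw [mul_add, mul_one, sin_add_two_pi]
  simp only [this]
  ring

lemma td_per (t : ℝ) : td k l (t + 1) = td k l t := by
  unfold td
  have h1 : ∀ x : ℝ, sin (2 * π * (x + 1)) = sin (2 * π * x) := fun x => by
    rw [mul_add, mul_one, sin_add_two_pi]
  have h2 : ∀ x : ℝ, cos (2 * π * (x + 1)) = cos (2 * π * x) := fun x => by
    rw [mul_add, mul_one, cos_add_two_pi]
  simp only [add_sub_right_comm, bp_per, bpd_per, h1, h2]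

lemma rho_hasDeriv (t : ℝ) : HasDerivAt (rho k l) (rd k l t) t := by
  unfold rho rd
  refine (bp_hasDeriv _ t).neg.add ?_
  refine HasDerivAt.fun_sum fun j _ => ?_
  exact (bp_hasDeriv _ _).comp_sub_const t (cc k l j)

lemma th_hasDeriv (t : ℝ) : HasDerivAt (th k l) (td k l t) t := by
  unfold th td
  have h1 : HasDerivAt (fun x : ℝ => Kk k * x) (Kk k) t := by
    simpa using (hasDerivAt_id t).const_mul (Kk k)
  refine h1.sub (HasDerivAt.const_mul _ ?_)
  refine HasDerivAt.fun_sum fun j _ => ?_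
  have h0 : HasDerivAt (fun x : ℝ => 2 * π * (x - cc k l j)) (2 * π) t := by
    simpa using ((hasDerivAt_id t).sub_const (cc k l j)).const_mul (2 * π)
  exact ((bp_hasDeriv _ _).comp_sub_const t (cc k l j)).mul h0.sin

lemma rd_cont : Continuous (rd k l) := by
  unfold rd
  have h1 := bpd_cont (w0 k)
  have h2 := bpd_cont (ep k l)
  fun_prop

lemma td_cont : Continuous (td k l) := by
  unfold td
  have h2 := bpd_cont (ep k l)
  have h3 := (bp_contDiff (ep k l)).continuous
  fun_prop

lemma ff_hasDeriv (t : ℝ) : HasDerivAt (ff k l)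
    (ff k l t * ((rd k l t : ℂ) + (td k l t : ℂ) * Complex.I)) t := by
  unfold ff
  exact (((rho_hasDeriv t).ofReal_comp).add (((th_hasDeriv t).ofReal_comp).mul_const _)).cexp

lemma ff_smooth : ContDiff ℝ (⊤ : ℕ∞) (ff k l) := by
  have h1 := bp_contDiff (w0 k)
  have h2 := bp_contDiff (ep k l)
  have hr : ContDiff ℝ (⊤ : ℕ∞) (rho k l) := by
    unfold rho
    refine h1.neg.add (ContDiff.sum fun j _ => ?_)
    exact h2.comp (by fun_prop)
  have ht : ContDiff ℝ (⊤ : ℕ∞) (th k l) := by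
    unfold th
    refine ContDiff.sub (by fun_prop) (ContDiff.mul contDiff_const (ContDiff.sum fun j _ => ?_))
    exact (h2.comp (by fun_prop)).mul (by fun_prop)
  unfold ff
  have e : ContDiff ℝ (⊤ : ℕ∞) (fun x : ℝ => (x : ℂ)) := Complex.ofRealCLM.contDiff
  exact ((e.comp hr).add ((e.comp ht).mul contDiff_const)).cexp

lemma ff_per : Function.Periodic (ff k l) 1 := by
  intro t
  unfold ff
  rw [rho_per, th_per, Complex.exp_eq_exp_iff_exists_int]
  refine ⟨k + 1, ?_⟩
  unfold Kk
  push_cast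
  ring

lemma spiral_at (hl : 1 ≤ l) {u : ℝ} (hu : |u| < w0 k) :
    rho k l u = - bp (w0 k) u ∧ th k l u = Kk k * u ∧ rd k l u = - bpd (w0 k) u ∧
      td k l u = Kk k := by
  rw [abs_lt] at hu
  have hb : ∀ j ∈ Finset.range l, ep k l ≤ |u - cc k l j| ∧ |u - cc k l j| ≤ 1 - ep k l := by
    intro j hj
    have h1 := cc_ge (k := k) hl j
    have h2 := cc_le (k := k) hl (Finset.mem_range.1 hj)
    have h3 := ep_pos (k := k) hl
    rw [abs_of_neg (by linarith)]
    constructor <;> linarith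
  have h1 : ∀ j ∈ Finset.range l, bp (ep k l) (u - cc k l j) = 0 := fun j hj =>
    bp_zero (ep_pos hl).le (hb j hj).1 (hb j hj).2
  have h2 : ∀ j ∈ Finset.range l, bpd (ep k l) (u - cc k l j) = 0 := fun j hj =>
    bpd_zero (ep_pos hl).le (hb j hj).1 (hb j hj).2
  refine ⟨?_, ?_, ?_, ?_⟩
  · unfold rho; rw [Finset.sum_eq_zero h1, add_zero]
  · unfold th; rw [Finset.sum_eq_zero fun j hj => by rw [h1 j hj, zero_mul]]; ring
  · unfold rd; rw [Finset.sum_eq_zero h2, add_zero]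
  · unfold td; rw [Finset.sum_eq_zero fun j hj => by rw [h1 j hj, h2 j hj, zero_mul, zero_mul, add_zero]]
    ring

lemma flat_at (hl : 1 ≤ l) {t : ℝ} (h1 : w0 k ≤ t) (h2 : t ≤ 1 - w0 k)
    (h : ∀ j < l, ep k l ≤ |t - cc k l j|) :
    rho k l t = 0 ∧ th k l t = Kk k * t ∧ rd k l t = 0 ∧ td k l t = Kk k := by
  have hw := w0_ge k
  have hb : ∀ j ∈ Finset.range l, ep k l ≤ |t - cc k l j| ∧ |t - cc k l j| ≤ 1 - ep k l := by
    intro j hj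
    refine ⟨h j (Finset.mem_range.1 hj), ?_⟩
    have h1 := cc_ge (k := k) hl j
    have h2 := cc_le (k := k) hl (Finset.mem_range.1 hj)
    have h3 := ep_pos (k := k) hl
    have h4 := ep_le (k := k) hl
    rw [abs_le]
    constructor <;> linarith
  have e1 : ∀ j ∈ Finset.range l, bp (ep k l) (t - cc k l j) = 0 := fun j hj =>
    bp_zero (ep_pos hl).le (hb j hj).1 (hb j hj).2
  have e2 : ∀ j ∈ Finset.range l, bpd (ep k l) (t - cc k l j) = 0 := fun j hj =>
    bpd_zero (ep_pos hl).le (hb j hj).1 (hb j hj).2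
  have a : |t| = t := abs_of_nonneg (by linarith)
  have e3 : bp (w0 k) t = 0 := bp_zero (by linarith) (by rwa [a]) (by rwa [a])
  have e4 : bpd (w0 k) t = 0 := bpd_zero (by linarith) (by rwa [a]) (by rwa [a])
  refine ⟨?_, ?_, ?_, ?_⟩
  · unfold rho; rw [Finset.sum_eq_zero e1, e3]; ring
  · unfold th; rw [Finset.sum_eq_zero fun j hj => by rw [e1 j hj, zero_mul]]; ring
  · unfold rd; rw [Finset.sum_eq_zero e2, e4]; ring
  · unfold td; rw [Finset.sum_eq_zero fun j hj => by rw [e1 j hj, e2 j hj, zero_mul, zero_mul, add_zero]]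
    ring

lemma kink_at (hl : 1 ≤ l) {j : ℕ} (hj : j < l) {u : ℝ} (hu : |u| < ep k l) :
    rho k l (cc k l j + u) = bp (ep k l) u ∧ th k l (cc k l j + u) = Kk k * cc k l j + xx k l u ∧
    rd k l (cc k l j + u) = bpd (ep k l) u ∧ td k l (cc k l j + u) = xxd k l u := by
  have hw := w0_ge k
  rw [abs_lt] at hu
  have c1 := cc_ge (k := k) hl j
  have c2 := cc_le (k := k) hl hj
  have hb : ∀ i ∈ Finset.range l, i ≠ j →
      ep k l ≤ |cc k l j + u - cc k l i| ∧ |cc k l j + u - cc k l i| ≤ 1 - ep k l := by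
    intro i hi hij
    have h1 := cc_ge (k := k) hl i
    have h2 := cc_le (k := k) hl (Finset.mem_range.1 hi)
    have h3 := ep_pos (k := k) hl
    have h4 := ep_le (k := k) hl
    constructor
    · rcases lt_or_gt_of_ne hij with h | h
      · have := cc_lt (k := k) hl h
        rw [abs_of_pos (by linarith)]; linarith
      · have := cc_lt (k := k) hl h
        rw [abs_of_neg (by linarith)]; linarith
    · rw [abs_le]
      constructor <;> linarith
  have e1 : ∀ i ∈ Finset.range l, i ≠ j → bp (ep k l) (cc k l j + u - cc k l i) = 0 :=
    fun i hi hij => bp_zero (ep_pos hl).le (hb i hi hij).1 (hb i hi hij).2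
  have e2 : ∀ i ∈ Finset.range l, i ≠ j → bpd (ep k l) (cc k l j + u - cc k l i) = 0 :=
    fun i hi hij => bpd_zero (ep_pos hl).le (hb i hi hij).1 (hb i hi hij).2
  have a : |cc k l j + u| = cc k l j + u := abs_of_nonneg (by linarith)
  have e3 : bp (w0 k) (cc k l j + u) = 0 :=
    bp_zero (by linarith) (by rw [a]; linarith) (by rw [a]; linarith)
  have e4 : bpd (w0 k) (cc k l j + u) = 0 :=
    bpd_zero (by linarith) (by rw [a]; linarith) (by rw [a]; linarith)
  have hj' : j ∉ Finset.range l → False := fun h => h (Finset.mem_range.2 hj)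
  have hs : cc k l j + u - cc k l j = u := by ring
  refine ⟨?_, ?_, ?_, ?_⟩
  · unfold rho; rw [Finset.sum_eq_single j e1 (fun h => (hj' h).elim), e3, hs]; ring
  · unfold th
    rw [Finset.sum_eq_single j (fun i hi hij => by rw [e1 i hi hij, zero_mul])
      (fun h => (hj' h).elim), hs]
    unfold xx; ring
  · unfold rd; rw [Finset.sum_eq_single j e2 (fun h => (hj' h).elim), e4, hs]; ring
  · unfold td
    rw [Finset.sum_eq_single j
      (fun i hi hij => by rw [e1 i hi hij, e2 i hi hij, zero_mul, zero_mul, add_zero])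
      (fun h => (hj' h).elim), hs]
    unfold xxd; ring

lemma reg (hl : 1 ≤ l) {t : ℝ} (h0 : 0 ≤ t) (h1 : t < 1) :
    (∃ u, |u| < w0 k ∧ (t = u ∨ t = u + 1) ∧ rho k l t = - bp (w0 k) u ∧ th k l t = Kk k * t ∧
      rd k l t = - bpd (w0 k) u ∧ td k l t = Kk k) ∨
    (∃ j < l, ∃ u, |u| < ep k l ∧ t = cc k l j + u) ∨
    (w0 k ≤ t ∧ t ≤ 1 - w0 k ∧ rho k l t = 0 ∧ th k l t = Kk k * t ∧ rd k l t = 0 ∧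
      td k l t = Kk k) := by
  rcases lt_or_ge t (w0 k) with h | h
  · left
    have hu : |t| < w0 k := by rwa [abs_of_nonneg h0]
    exact ⟨t, hu, Or.inl rfl, spiral_at hl hu⟩
  rcases lt_or_ge (1 - w0 k) t with h' | h'
  · left
    have hu : |t - 1| < w0 k := by rw [abs_of_neg (by linarith)]; linarith
    obtain ⟨a, b, c, d⟩ := spiral_at hl hu
    refine ⟨t - 1, hu, Or.inr (by ring), ?_, ?_, ?_, ?_⟩
    · rw [← a, ← rho_per (t - 1), sub_add_cancel]
    · have := th_per (k := k) (l := l) (t - 1)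
      rw [sub_add_cancel, b] at this
      rw [this]; ring
    · rw [← c, ← rd_per (t - 1), sub_add_cancel]
    · rw [← d, ← td_per (t - 1), sub_add_cancel]
  right
  by_cases hk : ∀ j < l, ep k l ≤ |t - cc k l j|
  · right
    exact ⟨h, h', flat_at hl h h' hk⟩
  · left
    push Not at hk
    obtain ⟨j, hj, hk⟩ := hk
    exact ⟨j, hj, t - cc k l j, hk, by ring⟩

lemma slit (hl : 1 ≤ l) {t : ℝ} (h0 : 0 ≤ t) (h1 : t < 1) :
    (0 < td k l t ∨ rd k l t ≠ 0) ∨ ∃ j < l, t = cc k l j := by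
  have hK := Kk_pos k
  rcases reg hl h0 h1 with ⟨u, _, _, _, _, _, h⟩ | ⟨j, hj, u, hu, h⟩ | ⟨_, _, _, _, _, h⟩
  · left; left; rw [h]; exact hK
  · obtain ⟨_, _, h3, h4⟩ := kink_at hl hj hu
    have hw : ep k l ≤ 1 / 2 := by linarith [ep_le (k := k) hl]
    rw [abs_lt] at hu
    rcases lt_trichotomy u 0 with h' | h' | h'
    · left; right; rw [h, h3]; exact (bpd_gt h' hu.1 hw).ne'
    · right; exact ⟨j, hj, by rw [h, h', add_zero]⟩
    · left; right; rw [h, h3]; exact (bpd_lt h' hu.2 hw).ne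
  · left; left; rw [h]; exact hK

lemma cc_val (hl : 1 ≤ l) {j : ℕ} (hj : j < l) :
    td k l (cc k l j) < 0 ∧ rd k l (cc k l j) = 0 := by
  obtain ⟨_, _, h3, h4⟩ := kink_at (k := k) (u := 0) hl hj (by rw [abs_zero]; exact ep_pos hl)
  rw [add_zero] at h3 h4
  rw [h3, h4, bpd_at_zero]
  exact ⟨xxd_zero hl, rfl⟩

lemma rd_fract (t : ℝ) : rd k l (Int.fract t) = rd k l t := by
  have h : Function.Periodic (rd k l) 1 := rd_per
  have := h.sub_int_mul_eq (x := t) ⌊t⌋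
  rwa [mul_one] at this

lemma td_fract (t : ℝ) : td k l (Int.fract t) = td k l t := by
  have h : Function.Periodic (td k l) 1 := td_per
  have := h.sub_int_mul_eq (x := t) ⌊t⌋
  rwa [mul_one] at this

lemma immersed (hl : 1 ≤ l) (t : ℝ) : (rd k l t : ℂ) + (td k l t : ℂ) * Complex.I ≠ 0 := by
  intro h
  have h1 : rd k l t = 0 := by simpa using congrArg Complex.re h
  have h2 : td k l t = 0 := by simpa using congrArg Complex.im h
  rw [← rd_fract] at h1
  rw [← td_fract] at h2
  rcases slit (k := k) hl (Int.fract_nonneg t) (Int.fract_lt_one t) with (h | h) | ⟨j, hj, h⟩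
  · linarith
  · exact h h1
  · rw [h] at h2
    linarith [(cc_val (k := k) hl hj).1]

/-- The curve `c_{ω,n}`. -/
def theCurve (k l : ℕ) (hl : 1 ≤ l) : PlanarCurve where
  toFun := ff k l
  periodic := ff_per
  smooth := ff_smooth
  immersion := fun t => by
    rw [(ff_hasDeriv t).deriv]
    exact mul_ne_zero (Complex.exp_ne_zero _) (immersed hl t)

lemma ff_eq_iff (s t : ℝ) : ff k l s = ff k l t ↔ rho k l s = rho k l t ∧
    ∃ n : ℤ, th k l s = th k l t + 2 * π * n := by
  unfold ff
  rw [Complex.exp_eq_exp_iff_exists_int]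
  constructor
  · rintro ⟨n, hn⟩
    refine ⟨by simpa using congrArg Complex.re hn, n, ?_⟩
    have := congrArg Complex.im hn
    simp at this
    linarith
  · rintro ⟨h, n, hn⟩
    refine ⟨n, ?_⟩
    rw [h, hn]
    push_cast
    ring

lemma det2_ff {s t : ℝ} (h : ff k l s = ff k l t) :
    det2 (deriv (ff k l) s) (deriv (ff k l) t) =
      Complex.normSq (ff k l t) * (rd k l s * td k l t - td k l s * rd k l t) := by
  rw [(ff_hasDeriv s).deriv, (ff_hasDeriv t).deriv, h]
  simp [det2, Complex.normSq_apply]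
  ring

/-- Parameters of the crossings. -/
def qq (k l : ℕ) (s0 : ℝ) : Fin k ⊕ Fin l → ℝ × ℝ
  | Sum.inl i => (2 * ((i : ℕ) + 1) * eta k, 1 - 2 * ((i : ℕ) + 1) * eta k)
  | Sum.inr j => (cc k l j - s0, cc k l j + s0)

lemma sg_bd {k i : ℕ} (hi : i < k) : 0 < 2 * ((i : ℝ) + 1) * eta k ∧
    2 * ((i : ℝ) + 1) * eta k < w0 k := by
  have h := eta_pos k
  have h2 := eta_eq k
  have : (i : ℝ) + 1 ≤ k := by exact_mod_cast hi
  refine ⟨by positivity, ?_⟩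
  unfold w0
  nlinarith

lemma spiral_cross (hl : 1 ≤ l) {i : ℕ} (hi : i < k) :
    let s := 2 * ((i : ℝ) + 1) * eta k
    ff k l s = ff k l (1 - s) ∧ 0 < det2 (deriv (ff k l) s) (deriv (ff k l) (1 - s)) := by
  intro s
  obtain ⟨hs1, hs2⟩ := sg_bd hi
  change 0 < s at hs1
  change s < w0 k at hs2
  have hw := w0_lt k
  obtain ⟨a1, a2, a3, a4⟩ := spiral_at (k := k) hl (u := s) (by rwa [abs_of_pos hs1])
  obtain ⟨b1, b2, b3, b4⟩ := spiral_at (k := k) hl (u := -s) (by rwa [abs_neg, abs_of_pos hs1])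
  have e : (1 - s) = -s + 1 := by ring
  have h : ff k l s = ff k l (1 - s) := by
    rw [ff_eq_iff]
    refine ⟨by rw [e, rho_per, a1, b1, bp_neg], (i : ℤ) - k, ?_⟩
    rw [e, th_per, a2, b2]
    have : s * (2 * (k + 1)) = i + 1 := by
      have := eta_eq k
      calc s * (2 * (k + 1)) = (i + 1) * (eta k * (4 * (k + 1))) := by simp only [s]; ring
        _ = _ := by rw [this, mul_one]
    unfold Kk
    push_cast
    linear_combination (2 * π) * this
  refine ⟨h, ?_⟩
  rw [det2_ff h, e, rd_per, td_per, a3, a4, b3, b4, bpd_neg]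
  have := bpd_lt hs1 hs2 hw.le
  have hK := Kk_pos k
  apply mul_pos (Complex.normSq_pos.2 (Complex.exp_ne_zero _))
  nlinarith

lemma kink_cross (hl : 1 ≤ l) {j : ℕ} (hj : j < l) {s : ℝ} (hs : 0 < s) (hse : s < ep k l)
    (hx : xx k l s = 0) (hxd : 0 < xxd k l s) :
    ff k l (cc k l j - s) = ff k l (cc k l j + s) ∧
      0 < det2 (deriv (ff k l) (cc k l j - s)) (deriv (ff k l) (cc k l j + s)) := by
  obtain ⟨a1, a2, a3, a4⟩ := kink_at (k := k) hl hj (u := s) (by rwa [abs_of_pos hs])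
  obtain ⟨b1, b2, b3, b4⟩ := kink_at (k := k) hl hj (u := -s) (by rwa [abs_neg, abs_of_pos hs])
  rw [← sub_eq_add_neg] at b1 b2 b3 b4
  have h : ff k l (cc k l j - s) = ff k l (cc k l j + s) := by
    rw [ff_eq_iff]
    refine ⟨by rw [a1, b1, bp_neg], 0, ?_⟩
    rw [a2, b2, xx_neg, hx]; simp
  refine ⟨h, ?_⟩
  rw [det2_ff h, a3, a4, b3, b4, bpd_neg, xxd_neg]
  have := bpd_lt hs hse (by linarith [ep_le (k := k) hl])
  apply mul_pos (Complex.normSq_pos.2 (Complex.exp_ne_zero _))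
  nlinarith

/-- angular range of the outer points -/
lemma outer_range (hl : 1 ≤ l) {j : ℕ} (hj : j < l) {u : ℝ} (hu : |u| < ep k l) :
    Kk k * (cc k l j - ep k l) < th k l (cc k l j + u) ∧
    th k l (cc k l j + u) < Kk k * (cc k l j + ep k l) := by
  obtain ⟨_, h, _, _⟩ := kink_at (k := k) hl hj hu
  have := xx_bd hl hu
  rw [abs_lt] at this
  rw [h]
  constructor <;> linarith

lemma int_zero {n : ℤ} (h1 : (n : ℝ) < 1) (h2 : -1 < (n : ℝ)) : n = 0 := by
  have h1' : n < 1 := by exact_mod_cast h1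
  have h2' : -1 < n := by exact_mod_cast h2
  omega

set_option maxHeartbeats 1000000 in
lemma classify (hl : 1 ≤ l) {s0 : ℝ}
    (huniq : ∀ u, 0 < u → u < ep k l → xx k l u = 0 → u = s0)
    {s t : ℝ} (hs : 0 ≤ s) (hst : s < t) (ht : t < 1) (h : ff k l s = ff k l t) :
    ∃ i, qq k l s0 i = (s, t) := by
  rw [ff_eq_iff] at h
  obtain ⟨hr, n, hn⟩ := h
  have hK := Kk_pos k
  have hw := w0_lt k
  have hw' := w0_ge k
  have he := ep_le (k := k) hl
  have hep := ep_pos (k := k) hl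
  have hpi := pi_pos
  have hKw : Kk k * (1 - 2 * w0 k) = π := by
    have := eta_eq k
    unfold Kk w0
    linear_combination π * this
  have hmul : ∀ {a b : ℝ}, a ≤ b → Kk k * a ≤ Kk k * b :=
    fun h => mul_le_mul_of_nonneg_left h hK.le
  have outer : Kk k * w0 k ≤ th k l s → th k l s ≤ Kk k * (1 - w0 k) →
      Kk k * w0 k ≤ th k l t → th k l t ≤ Kk k * (1 - w0 k) → th k l s = th k l t := by
    intro h1 h2 h3 h4
    have hz : n = 0 := by
      apply int_zero
      · by_contra hc; push Not at hc
        have := mul_le_mul_of_nonneg_left hc (show 0 ≤ 2 * π by linarith)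
        linarith
      · by_contra hc; push Not at hc
        have := mul_le_mul_of_nonneg_left hc (show 0 ≤ 2 * π by linarith)
        linarith
    rw [hn, hz]; simp
  rcases reg (k := k) hl hs (hst.trans ht) with
    ⟨u, hu, hu', su, st, _, _⟩ | ⟨j, hj, u, hu, hsu⟩ | ⟨s1, s2, s3, s4, _, _⟩
  · have hbu := bp_pos hu hw.le
    rcases reg (k := k) hl (hs.trans hst.le) ht with
      ⟨v, hv, hv', tv, tt, _, _⟩ | ⟨i, hi, v, hv, htv⟩ | ⟨_, _, t3, _, _, _⟩
    · rw [su, tv, neg_inj] at hr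
      have hab := bp_inj hw.le hu hv hr
      have hsum : s = u ∧ t = 1 - u := by
        rw [abs_lt] at hu hv
        rcases abs_eq_abs.1 hab with h' | h' <;> rcases hu' with h1 | h1 <;>
          rcases hv' with h2 | h2 <;> constructor <;> linarith
      have hs0 : 0 < s := by linarith [hsum.1, hsum.2]
      have hsw : s < w0 k := by rw [hsum.1]; exact lt_of_abs_lt hu
      rw [st, tt, hsum.2, ← hsum.1] at hn
      have e : s * (2 * (k + 1)) = ((n + k + 1 : ℤ) : ℝ) := by
        unfold Kk at hn
        have : 2 * π * (s * (2 * (k + 1))) = 2 * π * ((n + k + 1 : ℤ) : ℝ) := by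
          push_cast; linarith
        exact mul_left_cancel₀ (by positivity) this
      have hpos : 0 < n + k + 1 := by
        have : (0:ℝ) < ((n + k + 1 : ℤ) : ℝ) := by rw [← e]; positivity
        exact_mod_cast this
      have hlt : n + k + 1 < k + 1 := by
        have : ((n + k + 1 : ℤ) : ℝ) < ((k + 1 : ℤ) : ℝ) := by
          rw [← e]; push_cast
          have h4 : (0:ℝ) < 2 * (k + 1) := by positivity
          have := mul_lt_mul_of_pos_right (hsw.trans hw) h4
          linarith
        exact_mod_cast this
      obtain ⟨i, hi⟩ : ∃ i : ℕ, n + k + 1 = i + 1 := ⟨(n + k).toNat, by omega⟩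
      have hik : i < k := by omega
      refine ⟨Sum.inl ⟨i, hik⟩, ?_⟩
      have es : 2 * ((i:ℝ) + 1) * eta k = s := by
        rw [hi] at e
        push_cast at e
        rw [← e]
        linear_combination s * eta_eq k
      simp only [qq, es, Prod.mk.injEq, true_and]
      linarith [hsum.1, hsum.2]
    · exfalso
      have := (kink_at (k := k) hl hi hv).1
      have := bp_pos hv (by linarith)
      rw [htv] at hr
      linarith
    · exfalso; linarith
  · have hbu := bp_pos hu (by linarith)
    obtain ⟨k1, k2, _, _⟩ := kink_at (k := k) hl hj hu
    obtain ⟨o1, o2⟩ := outer_range (k := k) hl hj hu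
    have c1 := cc_ge (k := k) hl j
    have c2 := cc_le (k := k) hl hj
    rcases reg (k := k) hl (hs.trans hst.le) ht with
      ⟨v, hv, hv', tv, tt, _, _⟩ | ⟨i, hi, v, hv, htv⟩ | ⟨_, _, t3, _, _, _⟩
    · exfalso
      have := bp_pos hv hw.le
      rw [hsu] at hr
      linarith
    · obtain ⟨m1, m2, _, _⟩ := kink_at (k := k) hl hi hv
      obtain ⟨p1, p2⟩ := outer_range (k := k) hl hi hv
      have d1 := cc_ge (k := k) hl i
      have d2 := cc_le (k := k) hl hi
      have heq : th k l s = th k l t := by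
        apply outer
        · rw [hsu]; exact (hmul (by linarith)).trans o1.le
        · rw [hsu]; exact o2.le.trans (hmul (by linarith))
        · rw [htv]; exact (hmul (by linarith)).trans p1.le
        · rw [htv]; exact p2.le.trans (hmul (by linarith))
      have hij : i = j := by
        rw [hsu, htv] at heq
        rcases lt_trichotomy i j with h' | h' | h'
        · exfalso
          have := hmul (cc_lt (k := k) hl h')
          linarith
        · exact h'
        · exfalso
          have := hmul (cc_lt (k := k) hl h')
          linarith
      subst hij
      rw [hsu, htv] at heq hr hst
      rw [k2, m2] at heq
      rw [k1, m1] at hr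
      have hab := bp_inj (by linarith) hu hv hr
      have huv : u = -v := by
        rcases abs_eq_abs.1 hab with h' | h'
        · linarith
        · exact h'
      rw [huv, xx_neg] at heq
      have hxv : xx k l v = 0 := by linarith
      have hv0 : 0 < v := by linarith
      have := huniq v hv0 (lt_of_abs_lt hv) hxv
      refine ⟨Sum.inr ⟨i, hi⟩, ?_⟩
      simp only [qq, hsu, htv, huv, this]
      rw [sub_eq_add_neg]
    · exfalso
      rw [hsu] at hr
      linarith
  · rcases reg (k := k) hl (hs.trans hst.le) ht with
      ⟨v, hv, hv', tv, tt, _, _⟩ | ⟨i, hi, v, hv, htv⟩ | ⟨t1, t2, t3, t4, _, _⟩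
    · exfalso
      have := bp_pos hv hw.le
      linarith
    · exfalso
      have := (kink_at (k := k) hl hi hv).1
      have := bp_pos hv (by linarith)
      rw [htv] at hr
      linarith
    · exfalso
      have heq := outer (by rw [s4]; exact hmul s1) (by rw [s4]; exact hmul s2)
        (by rw [t4]; exact hmul t1) (by rw [t4]; exact hmul t2)
      rw [s4, t4] at heq
      exact hst.ne (mul_left_cancel₀ hK.ne' heq)

end curve

/-! ### Auxiliary: the Whitney number -/

section whitney
open Real
variable {k l : ℕ}

/-- The derivative direction relative to the radial frame, divided by `I`. -/
def GG (k l : ℕ) (t : ℝ) : ℂ := (td k l t : ℂ) - (rd k l t : ℂ) * Complex.I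

/-- The angle of the derivative. -/
def Th (k l : ℕ) (t : ℝ) : ℝ :=
  th k l t + π / 2 + (Complex.arg (GG k l t) - 2 * π * ∑ j ∈ Finset.range l, (⌊t - cc k l j⌋ : ℝ))

lemma GG_re (t : ℝ) : (GG k l t).re = td k l t := by simp [GG]
lemma GG_im (t : ℝ) : (GG k l t).im = - rd k l t := by simp [GG]

lemma GG_cont : Continuous (GG k l) := by
  unfold GG
  have h1 := rd_cont (k := k) (l := l)
  have h2 := td_cont (k := k) (l := l)
  fun_prop

lemma th_cont : Continuous (th k l) :=
  continuous_iff_continuousAt.2 fun t => (th_hasDeriv t).continuousAt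

lemma floor_ev (a t0 : ℝ) (h : ∀ p : ℤ, t0 ≠ a + p) :
    ∀ᶠ t in nhds t0, ⌊t - a⌋ = ⌊t0 - a⌋ := by
  have h1 : (⌊t0 - a⌋ : ℝ) + a < t0 := by
    refine lt_of_le_of_ne (by linarith [Int.floor_le (t0 - a)]) fun e => h ⌊t0 - a⌋ (by linarith)
  have h2 : t0 < ⌊t0 - a⌋ + 1 + a := by linarith [Int.lt_floor_add_one (t0 - a)]
  filter_upwards [Ioo_mem_nhds h1 h2] with t ht
  rw [Int.floor_eq_iff]
  constructor <;> linarith [ht.1, ht.2]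

lemma cc_ne (hl : 1 ≤ l) {i j : ℕ} (hi : i < l) (hj : j < l) (hij : i ≠ j) (p q : ℤ) :
    cc k l j + p ≠ cc k l i + q := by
  intro h
  have h1 := cc_ge (k := k) hl i
  have h2 := cc_le (k := k) hl hi
  have h3 := cc_ge (k := k) hl j
  have h4 := cc_le (k := k) hl hj
  have hw := w0_ge k
  have he := ep_pos (k := k) hl
  have hz : p - q = 0 := by
    apply int_zero <;> push_cast <;> linarith
  have hpq : (p : ℝ) = q := by
    have : p = q := by omega
    rw [this]
  rcases lt_or_gt_of_ne hij with h' | h'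
  · have := cc_lt (k := k) hl h'; linarith
  · have := cc_lt (k := k) hl h'; linarith

lemma Th_cont (hl : 1 ≤ l) : Continuous (Th k l) := by
  unfold Th
  refine (th_cont.add continuous_const).add ?_
  rw [continuous_iff_continuousAt]
  intro t0
  by_cases hc : ∃ j < l, ∃ p : ℤ, t0 = cc k l j + p
  · obtain ⟨j, hj, p, hp⟩ := hc
    have hper : ∀ u, rd k l (cc k l j + u + p) = rd k l (cc k l j + u) ∧
        td k l (cc k l j + u + p) = td k l (cc k l j + u) := by
      intro u
      rw [← rd_fract, Int.fract_add_intCast, rd_fract, ← td_fract, Int.fract_add_intCast, td_fract]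
      exact ⟨rfl, rfl⟩
    have hj' : j ∈ Finset.range l := Finset.mem_range.2 hj
    have hev : ∀ᶠ t in nhds t0, ∀ i ∈ (Finset.range l).erase j,
        ⌊t - cc k l i⌋ = ⌊t0 - cc k l i⌋ := by
      rw [Filter.eventually_all_finset]
      intro i hi
      rw [Finset.mem_erase, Finset.mem_range] at hi
      apply floor_ev
      intro q
      rw [hp]
      exact cc_ne hl hi.2 hj hi.1 p q
    have he := ep_pos (k := k) hl
    have hel := ep_le (k := k) hl
    have h0 := cc_val (k := k) hl hj
    have hre : (GG k l t0).re < 0 := by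
      have := (hper 0).2
      rw [add_zero] at this
      rw [GG_re, hp, this]; exact h0.1
    have hrev : ∀ᶠ t in nhds t0, (GG k l t).re < 0 :=
      (Complex.continuous_re.comp GG_cont).continuousAt.eventually_lt continuousAt_const hre
    have key : (fun t => Complex.arg (GG k l t) -
          2 * π * ∑ j ∈ Finset.range l, (⌊t - cc k l j⌋ : ℝ)) =ᶠ[nhds t0]
        fun t => Complex.arg (- GG k l t) + π - 2 * π *
          (p + ∑ i ∈ (Finset.range l).erase j, (⌊t0 - cc k l i⌋ : ℝ)) := by
      have hI : Set.Ioo (t0 - ep k l) (t0 + ep k l) ∈ nhds t0 :=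
        Ioo_mem_nhds (by linarith) (by linarith)
      filter_upwards [hev, hrev, hI] with t ht hret htI
      rw [← Finset.add_sum_erase _ _ hj', Finset.sum_congr rfl
        (fun i hi => by rw [ht i hi] : ∀ i ∈ (Finset.range l).erase j,
          (⌊t - cc k l i⌋ : ℝ) = (⌊t0 - cc k l i⌋ : ℝ))]
      have hu : |t - t0| < ep k l := by rw [abs_lt]; constructor <;> linarith [htI.1, htI.2]
      obtain ⟨_, _, k3, k4⟩ := kink_at (k := k) hl hj hu
      have hrd : rd k l t = bpd (ep k l) (t - t0) := by
        rw [← k3, ← (hper (t - t0)).1, hp]; congr 1; ring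
      rcases lt_or_ge t t0 with h | h
      · have hf : ⌊t - cc k l j⌋ = p - 1 := by
          rw [Int.floor_eq_iff]; push_cast; constructor <;> linarith [htI.1]
        have him : (GG k l t).im < 0 := by
          rw [GG_im, hrd]
          have := bpd_gt (w := ep k l) (x := t - t0) (by linarith) (by linarith [htI.1]) (by linarith)
          linarith
        rw [hf, Complex.arg_neg_eq_arg_add_pi_of_im_neg him]
        push_cast; ring
      · have hf : ⌊t - cc k l j⌋ = p := by
          rw [Int.floor_eq_iff]; constructor <;> linarith [htI.2]
        rcases h.eq_or_lt with h | h
        · have him : (GG k l t).im = 0 := by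
            rw [GG_im, hrd, ← h, sub_self, bpd_at_zero, neg_zero]
          have e1 : Complex.arg (GG k l t) = π := Complex.arg_eq_pi_iff.2 ⟨hret, him⟩
          have e2 : Complex.arg (- GG k l t) = 0 := Complex.arg_eq_zero_iff.2
            ⟨by simp only [Complex.neg_re]; linarith, by simp only [Complex.neg_im, him, neg_zero]⟩
          rw [hf, e1, e2]; ring
        · have him : 0 < (GG k l t).im := by
            rw [GG_im, hrd]
            have := bpd_lt (w := ep k l) (x := t - t0) (by linarith) (by linarith [htI.2]) (by linarith)
            linarith
          rw [hf, Complex.arg_neg_eq_arg_sub_pi_of_im_pos him]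
          ring
    refine ContinuousAt.congr ?_ key.symm
    have hs : - GG k l t0 ∈ Complex.slitPlane := by
      left; simp only [Complex.neg_re]; linarith
    have : ContinuousAt (fun t => Complex.arg (- GG k l t)) t0 :=
      ContinuousAt.comp (f := fun t => - GG k l t) (Complex.continuousAt_arg hs)
        GG_cont.neg.continuousAt
    exact (this.add continuousAt_const).sub continuousAt_const
  · push Not at hc
    have hs : GG k l t0 ∈ Complex.slitPlane := by
      rw [Complex.mem_slitPlane_iff, GG_re, GG_im, ← rd_fract, ← td_fract]
      rcases slit (k := k) hl (Int.fract_nonneg t0) (Int.fract_lt_one t0) with (h | h) | ⟨j, hj, h⟩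
      · exact Or.inl h
      · exact Or.inr (neg_ne_zero.2 h)
      · exfalso
        apply hc j hj ⌊t0⌋
        rw [← h, Int.fract_add_floor]
    have hev : ∀ᶠ t in nhds t0, ∀ i ∈ Finset.range l, ⌊t - cc k l i⌋ = ⌊t0 - cc k l i⌋ := by
      rw [Filter.eventually_all_finset]
      intro i hi
      exact floor_ev _ _ (hc i (Finset.mem_range.1 hi))
    have h1 : ContinuousAt (fun t => Complex.arg (GG k l t)) t0 :=
      ContinuousAt.comp (f := GG k l) (Complex.continuousAt_arg hs) GG_cont.continuousAt
    have h2 : ContinuousAt (fun t => Complex.arg (GG k l t) -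
        2 * π * ∑ i ∈ Finset.range l, (⌊t0 - cc k l i⌋ : ℝ)) t0 := h1.sub continuousAt_const
    refine h2.congr ?_
    filter_upwards [hev] with t ht
    rw [Finset.sum_congr rfl
        (fun i hi => by rw [ht i hi] : ∀ i ∈ Finset.range l,
          (⌊t - cc k l i⌋ : ℝ) = (⌊t0 - cc k l i⌋ : ℝ))]

lemma whitney (hl : 1 ≤ l) : (theCurve k l hl).HasWhitney (k + 1 - l) := by
  refine ⟨Th k l, Th_cont hl, ?_, ?_⟩
  · intro t
    change deriv (ff k l) t = (‖deriv (ff k l) t‖ : ℂ) * _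
    rw [(ff_hasDeriv t).deriv]
    have e1 : (rd k l t : ℂ) + (td k l t : ℂ) * Complex.I = Complex.I * GG k l t := by
      unfold GG
      linear_combination (rd k l t : ℂ) * Complex.I_mul_I
    have e2 : ‖ff k l t * (Complex.I * GG k l t)‖ = Real.exp (rho k l t) * ‖GG k l t‖ := by
      rw [norm_mul, norm_mul, Complex.norm_I, one_mul, ff, Complex.norm_exp]
      simp
    have e3 : Complex.exp ((Th k l t : ℂ) * Complex.I) =
        Complex.exp (th k l t * Complex.I) * Complex.I *
          Complex.exp (Complex.arg (GG k l t) * Complex.I) := by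
      have : ((Th k l t : ℂ) * Complex.I) = th k l t * Complex.I + (π / 2) * Complex.I +
          Complex.arg (GG k l t) * Complex.I +
          ((-∑ j ∈ Finset.range l, ⌊t - cc k l j⌋ : ℤ) : ℂ) * (2 * π * Complex.I) := by
        unfold Th
        push_cast
        ring
      rw [this, Complex.exp_add, Complex.exp_int_mul_two_pi_mul_I, mul_one, Complex.exp_add,
        Complex.exp_add, Complex.exp_pi_div_two_mul_I]
    rw [e1, e2, e3]
    have e4 := Complex.norm_mul_exp_arg_mul_I (GG k l t)
    conv_lhs => rw [← e4]
    rw [ff, Complex.exp_add, ← Complex.ofReal_exp]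
    push_cast
    ring
  · have h1 : th k l 1 = th k l 0 + Kk k := by
      have := th_per (k := k) (l := l) 0
      rwa [zero_add] at this
    have h2 : GG k l 1 = GG k l 0 := by
      have a := rd_per (k := k) (l := l) 0
      have b := td_per (k := k) (l := l) 0
      rw [zero_add] at a b
      unfold GG; rw [a, b]
    have h3 : ∀ j, (⌊1 - cc k l j⌋ : ℝ) = ⌊0 - cc k l j⌋ + 1 := by
      intro j
      have : (1 - cc k l j) = (0 - cc k l j) + 1 := by ring
      rw [this, Int.floor_add_one]; push_cast; rfl
    unfold Th
    rw [h1, h2]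
    simp only [h3, Finset.sum_add_distrib, Finset.sum_const, Finset.card_range, nsmul_eq_mul]
    unfold Kk
    push_cast
    ring

end whitney

/-! ### Auxiliary: combinatorics of the crossings -/

section combi
variable {k l : ℕ} {s0 : ℝ}

lemma sum_gt (i : Fin k) : (∑ j : Fin k, if i < j then (1:ℤ) else 0) = k - 1 - (i : ℕ) := by
  rw [Finset.sum_boole]
  have : Finset.filter (fun j => i < j) Finset.univ = Finset.Ioi i := by ext; simp
  rw [this, Fin.card_Ioi]
  have := i.2
  omega

lemma sum_lt (i : Fin k) : (∑ j : Fin k, if j < i then (-1:ℤ) else 0) = - (i : ℕ) := by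
  have h : ∀ j : Fin k, (if j < i then (-1:ℤ) else 0) = - (if j < i then (1:ℤ) else 0) := by
    intro j; split_ifs <;> simp
  simp only [h]
  rw [Finset.sum_neg_distrib, Finset.sum_boole]
  have : Finset.filter (fun j => j < i) Finset.univ = Finset.Iio i := by ext; simp
  rw [this, Fin.card_Iio]

lemma sum_ne (i : Fin l) : (∑ j : Fin l, if j = i then (0:ℤ) else 1) = l - 1 := by
  have h : ∀ j : Fin l, (if j = i then (0:ℤ) else 1) = 1 - (if j = i then (1:ℤ) else 0) := by
    intro j; split_ifs <;> simp
  simp only [h]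
  simp

lemma aa_lt {i j : ℕ} : 2 * ((i : ℝ) + 1) * eta k < 2 * ((j : ℝ) + 1) * eta k ↔ i < j := by
  have := eta_pos k
  constructor
  · intro h
    have := lt_of_mul_lt_mul_right h this.le
    have h' : (i : ℝ) < j := by linarith
    exact_mod_cast h'
  · intro h
    have h' : (i : ℝ) < j := by exact_mod_cast h
    exact mul_lt_mul_of_pos_right (by linarith) this

lemma qq_bd (hl : 1 ≤ l) (h1 : 0 < s0) (h2 : s0 < ep k l) (j : Fin l) :
    w0 k < cc k l j - s0 ∧ cc k l j - s0 < cc k l j + s0 ∧ cc k l j + s0 < 1 - w0 k := by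
  have := cc_ge (k := k) hl j
  have := cc_le (k := k) hl j.2
  refine ⟨?_, ?_, ?_⟩ <;> linarith

lemma qq_inj (hl : 1 ≤ l) (h1 : 0 < s0) (h2 : s0 < ep k l) : Function.Injective (qq k l s0) := by
  rintro (i | i) (j | j) h
  · simp only [qq, Prod.mk.injEq] at h
    have a : ¬ (i : ℕ) < j := fun h' => (aa_lt (k := k).2 h').ne h.1
    have b : ¬ (j : ℕ) < i := fun h' => (aa_lt (k := k).2 h').ne' h.1
    congr 1; apply Fin.ext; omega
  · exfalso
    simp only [qq, Prod.mk.injEq] at h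
    linarith [(sg_bd i.2).2, qq_bd hl h1 h2 j]
  · exfalso
    simp only [qq, Prod.mk.injEq] at h
    linarith [(sg_bd j.2).2, qq_bd hl h1 h2 i]
  · simp only [qq, Prod.mk.injEq] at h
    have he := ep_pos (k := k) hl
    have a : ¬ (i : ℕ) < j := fun h' => by have := cc_lt (k := k) hl h'; linarith [h.1]
    have b : ¬ (j : ℕ) < i := fun h' => by have := cc_lt (k := k) hl h'; linarith [h.1]
    congr 1; apply Fin.ext; omega

lemma qq_dis (hl : 1 ≤ l) (h1 : 0 < s0) (h2 : s0 < ep k l) (i j : Fin k ⊕ Fin l) :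
    (qq k l s0 i).2 ≠ (qq k l s0 j).1 := by
  have hw := w0_lt k
  have he := ep_pos (k := k) hl
  rcases i with i | i <;> rcases j with j | j <;> simp only [qq] <;> intro h
  · linarith [(sg_bd i.2).2, (sg_bd j.2).2]
  · linarith [(sg_bd i.2).2, qq_bd hl h1 h2 j]
  · linarith [(sg_bd j.2).2, qq_bd hl h1 h2 i]
  · rcases lt_trichotomy (i : ℕ) j with h' | h' | h'
    · have := cc_lt (k := k) hl h'; linarith
    · rw [h'] at h; linarith
    · have := cc_lt (k := k) hl h'; linarith

lemma a_inl (hl : 1 ≤ l) (h1 : 0 < s0) (h2 : s0 < ep k l) (i : Fin k) :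
    (∑ j, if (qq k l s0 (Sum.inl i)).1 < (qq k l s0 j).1 ∧ (qq k l s0 j).2 < (qq k l s0 (Sum.inl i)).2
      then 1 else 0 : ℤ) = l + (k - 1 - (i : ℕ)) := by
  rw [Fintype.sum_sum_type]
  have e1 : ∀ j : Fin k, ((qq k l s0 (Sum.inl i)).1 < (qq k l s0 (Sum.inl j)).1 ∧
      (qq k l s0 (Sum.inl j)).2 < (qq k l s0 (Sum.inl i)).2) ↔ i < j := by
    intro j
    simp only [qq, sub_lt_sub_iff_left, and_self, aa_lt, Fin.lt_def]
  have e2 : ∀ j : Fin l, ((qq k l s0 (Sum.inl i)).1 < (qq k l s0 (Sum.inr j)).1 ∧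
      (qq k l s0 (Sum.inr j)).2 < (qq k l s0 (Sum.inl i)).2) := by
    intro j
    simp only [qq]
    have := qq_bd hl h1 h2 j
    have := (sg_bd i.2).2
    constructor <;> linarith
  simp only [e1, e2, sum_gt, and_self, if_true, Finset.sum_const, Finset.card_univ, Fintype.card_fin]
  simp
  ring

lemma b_inl (hl : 1 ≤ l) (h1 : 0 < s0) (h2 : s0 < ep k l) (i : Fin k) :
    (∑ j, if (qq k l s0 (Sum.inl i)).2 < (qq k l s0 j).1 ∨ (qq k l s0 j).2 < (qq k l s0 (Sum.inl i)).1
      then 1 else if (qq k l s0 j).1 < (qq k l s0 (Sum.inl i)).1 ∧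
        (qq k l s0 (Sum.inl i)).2 < (qq k l s0 j).2 then -1 else 0 : ℤ) = - (i : ℕ) := by
  rw [Fintype.sum_sum_type]
  have hw := w0_lt k
  have e1 : ∀ j : Fin k, ¬ ((qq k l s0 (Sum.inl i)).2 < (qq k l s0 (Sum.inl j)).1 ∨
      (qq k l s0 (Sum.inl j)).2 < (qq k l s0 (Sum.inl i)).1) := by
    intro j
    simp only [qq]
    have := (sg_bd i.2).2
    have := (sg_bd j.2).2
    rintro (h | h) <;> linarith
  have e1' : ∀ j : Fin k, ((qq k l s0 (Sum.inl j)).1 < (qq k l s0 (Sum.inl i)).1 ∧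
      (qq k l s0 (Sum.inl i)).2 < (qq k l s0 (Sum.inl j)).2) ↔ j < i := by
    intro j
    simp only [qq, sub_lt_sub_iff_left, and_self, aa_lt, Fin.lt_def]
  have e2 : ∀ j : Fin l, ¬ ((qq k l s0 (Sum.inl i)).2 < (qq k l s0 (Sum.inr j)).1 ∨
      (qq k l s0 (Sum.inr j)).2 < (qq k l s0 (Sum.inl i)).1) := by
    intro j
    simp only [qq]
    have := (sg_bd i.2).2
    have := qq_bd hl h1 h2 j
    rintro (h | h) <;> linarith
  have e2' : ∀ j : Fin l, ¬ ((qq k l s0 (Sum.inr j)).1 < (qq k l s0 (Sum.inl i)).1 ∧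
      (qq k l s0 (Sum.inl i)).2 < (qq k l s0 (Sum.inr j)).2) := by
    intro j
    simp only [qq]
    have := (sg_bd i.2).2
    have := qq_bd hl h1 h2 j
    rintro ⟨h, h'⟩; linarith
  simp only [e1, e2, e1', e2', if_false, sum_lt, Finset.sum_const_zero, add_zero]

lemma a_inr (hl : 1 ≤ l) (h1 : 0 < s0) (h2 : s0 < ep k l) (i : Fin l) :
    (∑ j, if (qq k l s0 (Sum.inr i)).1 < (qq k l s0 j).1 ∧ (qq k l s0 j).2 < (qq k l s0 (Sum.inr i)).2
      then 1 else 0 : ℤ) = 0 := by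
  apply Finset.sum_eq_zero
  rintro (j | j) _ <;> rw [if_neg] <;> simp only [qq] <;> rintro ⟨h, h'⟩
  · linarith [(sg_bd j.2).2, qq_bd hl h1 h2 i]
  · linarith

lemma b_inr (hl : 1 ≤ l) (h1 : 0 < s0) (h2 : s0 < ep k l) (i : Fin l) :
    (∑ j, if (qq k l s0 (Sum.inr i)).2 < (qq k l s0 j).1 ∨ (qq k l s0 j).2 < (qq k l s0 (Sum.inr i)).1
      then 1 else if (qq k l s0 j).1 < (qq k l s0 (Sum.inr i)).1 ∧
        (qq k l s0 (Sum.inr i)).2 < (qq k l s0 j).2 then -1 else 0 : ℤ) = l - 1 - k := by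
  rw [Fintype.sum_sum_type]
  have hw := w0_lt k
  have e1 : ∀ j : Fin k, ¬ ((qq k l s0 (Sum.inr i)).2 < (qq k l s0 (Sum.inl j)).1 ∨
      (qq k l s0 (Sum.inl j)).2 < (qq k l s0 (Sum.inr i)).1) := by
    intro j
    simp only [qq]
    have := (sg_bd j.2).2
    have := qq_bd hl h1 h2 i
    rintro (h | h) <;> linarith
  have e1' : ∀ j : Fin k, ((qq k l s0 (Sum.inl j)).1 < (qq k l s0 (Sum.inr i)).1 ∧
      (qq k l s0 (Sum.inr i)).2 < (qq k l s0 (Sum.inl j)).2) := by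
    intro j
    simp only [qq]
    have := (sg_bd j.2).2
    have := qq_bd hl h1 h2 i
    constructor <;> linarith
  have e2 : ∀ j : Fin l, (if (qq k l s0 (Sum.inr i)).2 < (qq k l s0 (Sum.inr j)).1 ∨
      (qq k l s0 (Sum.inr j)).2 < (qq k l s0 (Sum.inr i)).1 then 1 else
      if (qq k l s0 (Sum.inr j)).1 < (qq k l s0 (Sum.inr i)).1 ∧
      (qq k l s0 (Sum.inr i)).2 < (qq k l s0 (Sum.inr j)).2 then -1 else 0 : ℤ) =
      if j = i then 0 else 1 := by
    intro j
    rcases lt_trichotomy (i : ℕ) j with h' | h' | h'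
    · have := cc_lt (k := k) hl h'
      rw [if_pos (Or.inl (show (qq k l s0 (Sum.inr i)).2 < (qq k l s0 (Sum.inr j)).1 by simp only [qq]; linarith)), if_neg (fun h => by rw [h] at h'; exact lt_irrefl _ h')]
    · have : i = j := Fin.ext h'
      subst this
      rw [if_neg (by simp only [qq]; rintro (h | h) <;> linarith), if_neg (fun h => lt_irrefl _ h.1), if_pos rfl]
    · have := cc_lt (k := k) hl h'
      rw [if_pos (Or.inr (show (qq k l s0 (Sum.inr j)).2 < (qq k l s0 (Sum.inr i)).1 by simp only [qq]; linarith)), if_neg (fun h => by rw [h] at h'; exact lt_irrefl _ h')]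
  simp only [e1, e1', e2, sum_ne, if_false, and_self, if_true, Finset.sum_const, Finset.card_univ,
    Fintype.card_fin]
  simp
  ring

lemma main (hl : 1 ≤ l) : ∃ c : PlanarCurve, c.Stable ∧ c.crossings = k + l ∧
    c.HasWhitney (k + 1 - l) ∧ c.fX = (∑ i ∈ Finset.range k,
      FreeAbelianGroup.of (((l : ℤ) + i : ℤ), ((i : ℤ) + 1 - k))) +
        (l : ℤ) • FreeAbelianGroup.of ((0 : ℤ), (l : ℤ) - 1 - k) := by
  obtain ⟨s0, h1, h2, hx, hxd, huniq⟩ := xx_zero_exists (k := k) hl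
  have hw := w0_lt k
  have hw' := w0_ge k
  have hC : PlanarCurve.crossingPairsF (ff k l) = Set.range (qq k l s0) := by
    ext ⟨s, t⟩
    simp only [PlanarCurve.crossingPairsF, Set.mem_setOf_eq, Set.mem_range]
    constructor
    · rintro ⟨hs, ht, hst, h⟩
      exact classify hl huniq hs.1 hst ht.2 h
    · rintro ⟨i | j, h⟩
      · simp only [qq, Prod.mk.injEq] at h
        obtain ⟨h, h'⟩ := h
        have hb := sg_bd i.2
        have hc := (spiral_cross (k := k) hl i.2).1
        rw [h] at hb
        rw [h] at hc h'
        rw [← h']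
        exact ⟨⟨by linarith, by linarith⟩, ⟨by linarith, by linarith⟩, by linarith, hc⟩
      · simp only [qq, Prod.mk.injEq] at h
        obtain ⟨h, h'⟩ := h
        have hb := qq_bd hl h1 h2 j
        have hc := (kink_cross (k := k) hl j.2 h1 h2 hx hxd).1
        rw [h, h'] at hb hc
        exact ⟨⟨by linarith, by linarith⟩, ⟨by linarith, by linarith⟩, by linarith, hc⟩
  have hpos : ∀ i, 0 < det2 (deriv (ff k l) (qq k l s0 i).1) (deriv (ff k l) (qq k l s0 i).2) := by
    rintro (i | j)
    · exact (spiral_cross (k := k) hl i.2).2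
    · exact (kink_cross (k := k) hl j.2 h1 h2 hx hxd).2
  have hinj := qq_inj (k := k) hl h1 h2
  have hdis := qq_dis (k := k) hl h1 h2
  refine ⟨theCurve k l hl, stable hC hpos hdis, ?_, whitney hl, ?_⟩
  · refine (crossings_eq hC hinj hdis).trans ?_
    simp
  · rw [fX_eq (theCurve k l hl) hC hinj hpos, Fintype.sum_sum_type]
    simp only [a_inl hl h1 h2, b_inl hl h1 h2, a_inr hl h1 h2, b_inr hl h1 h2]
    congr 1
    · rw [Fin.sum_univ_eq_sum_range (fun i : ℕ =>
        FreeAbelianGroup.of ((l : ℤ) + (k - 1 - (i : ℕ)), (-(i : ℕ) : ℤ))) k,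
        ← Finset.sum_range_reflect]
      apply Finset.sum_congr rfl
      intro i hi
      have hi := Finset.mem_range.1 hi
      congr 2 <;> omega
    · simp

end combi

end Aux

/-- For integers `n ≥ ω ≥ 0` of opposite parity, with
`k = (n + ω - 1)/2` and `l = (n - ω + 1)/2`, the invariant `g = φ ∘ f^X` of the curve
`c_{ω,n}` equals `k(l + k - 1) + l(k - l + 1) = (1/2)n² + (ω - 1)n + (1/2)(1 - ω²)`. -/
theorem statement16 (ω n : ℤ) (h0 : 0 ≤ ω) (hn : ω ≤ n) (hpar : Odd (n + ω))
    (k l : ℤ) (hk : k = (n + ω - 1) / 2) (hl : l = (n - ω + 1) / 2) :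
    ∃ c : PlanarCurve, c.Stable ∧ (c.crossings : ℤ) = n ∧ c.HasWhitney ω ∧
      PlanarCurve.fX c =
        (∑ i ∈ Finset.range k.toNat,
          FreeAbelianGroup.of ((l + i : ℤ), ((i : ℤ) + 1 - k))) +
        l • FreeAbelianGroup.of ((0 : ℤ), l - 1 - k) ∧
      PlanarCurve.g c = k * (l + k - 1) + l * (k - l + 1) ∧
      (PlanarCurve.g c : ℚ) =
        1 / 2 * (n : ℚ) ^ 2 + ((ω : ℚ) - 1) * n + 1 / 2 * (1 - (ω : ℚ) ^ 2) := by
  have hk0 : 0 ≤ k := by obtain ⟨a, ha⟩ := hpar; omega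
  have hl1 : 1 ≤ l := by obtain ⟨a, ha⟩ := hpar; omega
  have hn' : n = k + l := by obtain ⟨a, ha⟩ := hpar; omega
  have hω' : ω = k + 1 - l := by obtain ⟨a, ha⟩ := hpar; omega
  clear hk hl
  obtain ⟨K, rfl⟩ := Int.eq_ofNat_of_zero_le hk0
  obtain ⟨L, rfl⟩ := Int.eq_ofNat_of_zero_le (zero_le_one.trans hl1)
  obtain ⟨c, hc1, hc2, hc3, hc4⟩ := Aux.main (k := K) (l := L) (by omega)
  have hg : c.g = (K : ℤ) * (L + K - 1) + L * (K - L + 1) := by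
    unfold PlanarCurve.g
    rw [hc4, map_add, map_sum, map_zsmul]
    simp only [phi, FreeAbelianGroup.lift_apply_of]
    have e : ∀ x : ℕ, ((L : ℤ) + x - (x + 1 - K)) = L + K - 1 := fun x => by ring
    simp only [e, Finset.sum_const, Finset.card_range, smul_eq_mul, nsmul_eq_mul]
    push_cast
    ring
  refine ⟨c, hc1, by rw [hc2, hn']; push_cast; ring, by rw [hω']; exact hc3, ?_, hg, ?_⟩
  · rw [hc4, Int.toNat_natCast]
  · rw [hg, hn', hω']
    push_cast
    ring

end CurvePaper
end
end

section
/- The values of the invariants f^X and g = φ ∘ f^X on the standard curves δ_ω are: f^X(δ_0) = X_{0,0} and g(δ_0) = 0; and for ω > 0, f^X(δ_ω) = (ω − 1)·X_{2−ω, 0} and g(δ_ω) = −ω² + 3ω − 2. -/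
open Set
open scoped ENNReal

noncomputable section

namespace CurvePaper


namespace PlanarCurve

lemma deltaPos_re (m : ℕ) (t : ℝ) : (deltaFunPos m t).re =
    Real.cos (2 * Real.pi * m * t) + (2 * (m:ℝ) / 3) * Real.cos (2 * Real.pi * t) := by
  unfold deltaFunPos
  rw [Complex.add_re, Complex.exp_ofReal_mul_I_re, Complex.re_ofReal_mul,
    Complex.exp_ofReal_mul_I_re]

lemma deltaPos_im (m : ℕ) (t : ℝ) : (deltaFunPos m t).im =
    Real.sin (2 * Real.pi * m * t) + (2 * (m:ℝ) / 3) * Real.sin (2 * Real.pi * t) := by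
  unfold deltaFunPos
  rw [Complex.add_im, Complex.exp_ofReal_mul_I_im, Complex.im_ofReal_mul,
    Complex.exp_ofReal_mul_I_im]

lemma deltaPos_deriv (m : ℕ) (t : ℝ) : deriv (deltaFunPos m) t =
    Complex.exp (((2 * Real.pi * (m : ℝ) * t : ℝ) : ℂ) * Complex.I) *
      (((2 * Real.pi * m : ℝ) : ℂ) * Complex.I) +
    ((2 * (m : ℝ) / 3 : ℝ) : ℂ) * (Complex.exp (((2 * Real.pi * t : ℝ) : ℂ) * Complex.I) *
      (((2 * Real.pi : ℝ) : ℂ) * Complex.I)) := by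
  have key : ∀ a : ℝ, HasDerivAt (fun t : ℝ => Complex.exp (((a * t : ℝ) : ℂ) * Complex.I))
      (Complex.exp (((a * t : ℝ) : ℂ) * Complex.I) * ((a : ℂ) * Complex.I)) t := by
    intro a
    have h1 : HasDerivAt (fun t : ℝ => a * t) a t := by
      simpa using (hasDerivAt_id t).const_mul a
    exact (h1.ofReal_comp.mul_const Complex.I).cexp
  exact ((key (2 * Real.pi * m)).add ((key (2 * Real.pi)).const_mul _)).deriv

lemma deltaPos_det (m : ℕ) (x y : ℝ) :
    det2 (deriv (deltaFunPos m) x) (deriv (deltaFunPos m) y) =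
    4 * Real.pi ^ 2 * ((m:ℝ) ^ 2 * Real.sin (2 * (m * (Real.pi * (y - x))))
      + (2 * (m:ℝ) / 3) ^ 2 * Real.sin (2 * (Real.pi * (y - x)))
      + 2 * m * (2 * (m:ℝ) / 3) * Real.sin (m * (Real.pi * (y - x)) + Real.pi * (y - x))
        * Real.cos ((m - 1) * (Real.pi * (x + y)))) := by
  rw [deltaPos_deriv, deltaPos_deriv]
  have e1 : 2 * ((m:ℝ) * (Real.pi * (y - x))) = 2 * Real.pi * m * y - 2 * Real.pi * m * x := by ring
  have e2 : 2 * (Real.pi * (y - x)) = 2 * Real.pi * y - 2 * Real.pi * x := by ring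
  have e3 : 2 * Real.sin (m * (Real.pi * (y - x)) + Real.pi * (y - x))
        * Real.cos (((m:ℝ) - 1) * (Real.pi * (x + y))) =
      Real.sin (2 * Real.pi * m * y - 2 * Real.pi * x) +
      Real.sin (2 * Real.pi * y - 2 * Real.pi * m * x) := by
    rw [show 2 * Real.pi * m * y - 2 * Real.pi * x =
        (m * (Real.pi * (y - x)) + Real.pi * (y - x)) + ((m:ℝ) - 1) * (Real.pi * (x + y)) by ring,
      show 2 * Real.pi * y - 2 * Real.pi * m * x =
        (m * (Real.pi * (y - x)) + Real.pi * (y - x)) - ((m:ℝ) - 1) * (Real.pi * (x + y)) by ring,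
      Real.sin_add _ (((m:ℝ) - 1) * (Real.pi * (x + y))), Real.sin_sub]
    ring
  have e4 : 2 * (m:ℝ) * (2 * (m:ℝ) / 3) * Real.sin (m * (Real.pi * (y - x)) + Real.pi * (y - x))
        * Real.cos (((m:ℝ) - 1) * (Real.pi * (x + y))) = m * (2 * (m:ℝ) / 3) *
      (Real.sin (2 * Real.pi * m * y - 2 * Real.pi * x) +
      Real.sin (2 * Real.pi * y - 2 * Real.pi * m * x)) := by
    rw [← e3]; ring
  rw [e4, e1, e2]
  simp only [det2, Complex.add_re, Complex.add_im, Complex.mul_re, Complex.mul_im,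
    Complex.ofReal_re, Complex.ofReal_im, Complex.I_re, Complex.I_im,
    Complex.exp_ofReal_mul_I_re, Complex.exp_ofReal_mul_I_im, Real.sin_sub]
  ring

lemma deltaPos_eq_iff (m : ℕ) (x y : ℝ) : deltaFunPos m x = deltaFunPos m y ↔
    Real.sin (((m:ℝ) - 1) * (Real.pi * (x + y))) * Real.sin (m * (Real.pi * (y - x))) = 0 ∧
    Real.cos (((m:ℝ) - 1) * (Real.pi * (x + y))) * Real.sin (m * (Real.pi * (y - x))) =
      - (2 * (m:ℝ) / 3) * Real.sin (Real.pi * (y - x)) := by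
  rw [Complex.ext_iff, deltaPos_re, deltaPos_re, deltaPos_im, deltaPos_im]
  generalize (2 * (m:ℝ) / 3) = r
  have e1 : 2 * Real.pi * m * x = (((m:ℝ) - 1) * (Real.pi * (x + y)) + Real.pi * (x + y))
      - m * (Real.pi * (y - x)) := by ring
  have e2 : 2 * Real.pi * m * y = (((m:ℝ) - 1) * (Real.pi * (x + y)) + Real.pi * (x + y))
      + m * (Real.pi * (y - x)) := by ring
  have e3 : 2 * Real.pi * x = Real.pi * (x + y) - Real.pi * (y - x) := by ring
  have e4 : 2 * Real.pi * y = Real.pi * (x + y) + Real.pi * (y - x) := by ring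
  rw [e1, e2, e3, e4]
  generalize ((m:ℝ) - 1) * (Real.pi * (x + y)) = B
  generalize m * (Real.pi * (y - x)) = W
  generalize Real.pi * (x + y) = A
  generalize Real.pi * (y - x) = V
  simp only [Real.cos_add, Real.sin_add, Real.cos_sub, Real.sin_sub]
  have hA := Real.sin_sq_add_cos_sq A
  generalize Real.sin A = sA at *
  generalize Real.cos A = cA at *
  constructor
  · rintro ⟨h1, h2⟩
    constructor
    · linear_combination (1/2) * cA * h1 + (1/2) * sA * h2 - (Real.sin B * Real.sin W) * hA
    · linear_combination (1/2) * sA * h1 - (1/2) * cA * h2 -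
        (Real.cos B * Real.sin W + r * Real.sin V) * hA
  · rintro ⟨h1, h2⟩
    constructor
    · linear_combination 2 * cA * h1 + 2 * sA * h2
    · linear_combination 2 * sA * h1 - 2 * cA * h2

lemma k_neg (m : ℕ) (hm : 2 ≤ m) (v : ℝ) (h0 : 0 < v) (h1 : v ≤ Real.pi / m) :
    m * Real.cos (m * v) * Real.sin v - Real.sin (m * v) * Real.cos v < 0 := by
  have hm' : (2:ℝ) ≤ m := by exact_mod_cast hm
  have hd : ∀ x : ℝ, HasDerivAt
      (fun v : ℝ => m * Real.cos (m * v) * Real.sin v - Real.sin (m * v) * Real.cos v)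
      ((1 - (m:ℝ)^2) * (Real.sin (m * x) * Real.sin x)) x := by
    intro x
    have hl : HasDerivAt (fun v : ℝ => (m:ℝ) * v) m x := by
      simpa using (hasDerivAt_id x).const_mul (m:ℝ)
    exact (((hl.cos.const_mul (m:ℝ)).mul (Real.hasDerivAt_sin x)).sub
      (hl.sin.mul (Real.hasDerivAt_cos x))).congr_deriv (by ring)
  have hanti : StrictAntiOn
      (fun v : ℝ => m * Real.cos (m * v) * Real.sin v - Real.sin (m * v) * Real.cos v)
      (Set.Icc 0 (Real.pi / m)) := by
    apply strictAntiOn_of_deriv_neg (convex_Icc _ _)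
    · exact fun x _ => (hd x).continuousAt.continuousWithinAt
    · intro x hx
      rw [interior_Icc] at hx
      rw [(hd x).deriv]
      have hmx : m * x < Real.pi := by
        have := (lt_div_iff₀ (by linarith : (0:ℝ) < m)).1 hx.2
        linarith
      have s1 : 0 < Real.sin (m * x) := Real.sin_pos_of_pos_of_lt_pi (by nlinarith [hx.1]) hmx
      have s2 : 0 < Real.sin x := Real.sin_pos_of_pos_of_lt_pi hx.1 (by nlinarith [hx.1])
      exact mul_neg_of_neg_of_pos (by nlinarith) (mul_pos s1 s2)
  have := hanti (Set.left_mem_Icc.2 (h0.le.trans h1)) ⟨h0.le, h1⟩ h0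
  simpa using this

lemma exists_v (m : ℕ) (hm : 2 ≤ m) : ∃ v : ℝ, 0 < v ∧ m * v < Real.pi ∧
    Real.sin (m * v) = (2 * (m:ℝ) / 3) * Real.sin v ∧
    m * Real.cos (m * v) < (2 * (m:ℝ) / 3) * Real.cos v ∧
    ∀ w, 0 < w → w < Real.pi → |Real.sin (m * w)| = (2 * (m:ℝ) / 3) * Real.sin w →
      w = v ∨ w = Real.pi - v := by
  have hm' : (2:ℝ) ≤ m := by exact_mod_cast hm
  have hm0 : (0:ℝ) < m := by linarith
  have hpi := Real.pi_pos
  have hab : Real.pi / (6 * m) ≤ Real.pi / m := by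
    gcongr; linarith
  have hcont : ContinuousOn (fun v : ℝ => Real.sin (m * v) - (2 * (m:ℝ) / 3) * Real.sin v)
    (Set.Icc (Real.pi / (6 * m)) (Real.pi / m)) := by fun_prop
  have hpm : Real.pi / m ≤ Real.pi / 2 := by gcongr
  have hleft : 0 < Real.sin (m * (Real.pi / (6 * m))) - (2 * (m:ℝ) / 3) * Real.sin (Real.pi / (6 * m)) := by
    rw [show m * (Real.pi / (6 * m)) = Real.pi / 6 by field_simp, Real.sin_pi_div_six]
    have h1 := Real.sin_le (show 0 ≤ Real.pi / (6 * m) by positivity)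
    have h2 : (2 * (m:ℝ) / 3) * Real.sin (Real.pi / (6 * m)) ≤ (2 * (m:ℝ) / 3) * (Real.pi / (6 * m)) := by
      gcongr
    have h3 : (2 * (m:ℝ) / 3) * (Real.pi / (6 * m)) = Real.pi / 9 := by field_simp; norm_num
    have := Real.pi_lt_four
    linarith
  have hright : Real.sin (m * (Real.pi / m)) - (2 * (m:ℝ) / 3) * Real.sin (Real.pi / m) < 0 := by
    rw [show m * (Real.pi / m) = Real.pi by field_simp, Real.sin_pi]
    have := Real.sin_pos_of_pos_of_lt_pi (show 0 < Real.pi / m by positivity) (by linarith)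
    have : 0 < (2 * (m:ℝ) / 3) * Real.sin (Real.pi / m) := by positivity
    linarith
  obtain ⟨v, hv, hv0⟩ := intermediate_value_Icc' hab hcont ⟨hright.le, hleft.le⟩
  simp only at hv0
  have hvpos : 0 < v := lt_of_lt_of_le (by positivity) hv.1
  have hvlt : v < Real.pi / m := by
    rcases hv.2.lt_or_eq with h | h
    · exact h
    · rw [h] at hv0; linarith
  have hmv : m * v < Real.pi := by
    have := (lt_div_iff₀ hm0).1 hvlt
    linarith
  have hsv : 0 < Real.sin v := Real.sin_pos_of_pos_of_lt_pi hvpos (by linarith)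
  have hanti : StrictAntiOn (fun v : ℝ => Real.sin (m * v) / Real.sin v) (Set.Ioc 0 (Real.pi / m)) := by
    have hd : ∀ x ∈ Set.Ioc 0 (Real.pi / m), HasDerivAt (fun v : ℝ => Real.sin (m * v) / Real.sin v)
      ((m * Real.cos (m * x) * Real.sin x - Real.sin (m * x) * Real.cos x) / Real.sin x ^ 2) x := by
      intro x hx
      have hsx : 0 < Real.sin x := Real.sin_pos_of_pos_of_lt_pi hx.1 (by linarith [hx.2])
      have hl : HasDerivAt (fun v : ℝ => (m:ℝ) * v) m x := by
        simpa using (hasDerivAt_id x).const_mul (m:ℝ)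
      exact (hl.sin.div (Real.hasDerivAt_sin x) hsx.ne').congr_deriv (by ring)
    apply strictAntiOn_of_deriv_neg (convex_Ioc _ _)
    · exact fun x hx => (hd x hx).continuousAt.continuousWithinAt
    · intro x hx
      rw [interior_Ioc] at hx
      have hx' : x ∈ Set.Ioc 0 (Real.pi / m) := ⟨hx.1, hx.2.le⟩
      rw [(hd x hx').deriv]
      have hsx : 0 < Real.sin x := Real.sin_pos_of_pos_of_lt_pi hx.1 (by linarith [hx.2])
      exact div_neg_of_neg_of_pos (k_neg m hm x hx.1 hx.2.le) (by positivity)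
  have huniq : ∀ w, 0 < w → w ≤ Real.pi / 2 → |Real.sin (m * w)| = (2 * (m:ℝ) / 3) * Real.sin w →
      w = v := by
    intro w hw hw2 he
    have hsw : 0 < Real.sin w := Real.sin_pos_of_pos_of_lt_pi hw (by linarith)
    by_cases hc : w ≤ Real.pi / m
    · have hmw : m * w ≤ Real.pi := by
        have := (le_div_iff₀ hm0).1 hc
        linarith
      rw [abs_of_nonneg (Real.sin_nonneg_of_nonneg_of_le_pi (by positivity) hmw)] at he
      apply hanti.injOn ⟨hw, hc⟩ ⟨hvpos, hvlt.le⟩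
      simp only
      rw [div_eq_div_iff hsw.ne' hsv.ne', he, sub_eq_zero.1 hv0]
      ring
    · exfalso
      push Not at hc
      have h1 := Real.mul_le_sin hw.le hw2
      have h2 : 2 / Real.pi * (Real.pi / m) ≤ 2 / Real.pi * w := by gcongr
      have h3 : 2 / Real.pi * (Real.pi / m) = 2 / m := by field_simp
      have h4 : (2 * (m:ℝ) / 3) * (2 / m) ≤ (2 * (m:ℝ) / 3) * Real.sin w := by
        gcongr; linarith
      have h5 : (2 * (m:ℝ) / 3) * (2 / m) = 4 / 3 := by field_simp; norm_num
      have := Real.abs_sin_le_one (m * w)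
      linarith
  refine ⟨v, hvpos, hmv, sub_eq_zero.1 hv0, ?_, ?_⟩
  · have := k_neg m hm v hvpos hvlt.le
    rw [sub_eq_zero.1 hv0] at this
    by_contra hcon
    push Not at hcon
    nlinarith
  · intro w hw hwpi he
    by_cases hc : w ≤ Real.pi / 2
    · exact Or.inl (huniq w hw hc he)
    · right
      push Not at hc
      have := huniq (Real.pi - w) (by linarith) (by linarith) (by
        rw [Real.sin_pi_sub, ← he, show (m:ℝ) * (Real.pi - w) = m * Real.pi - m * w by ring,
          Real.sin_nat_mul_pi_sub]
        simp [abs_mul])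
      linarith

lemma deltaPos_periodic (m : ℕ) (x : ℝ) : deltaFunPos m (x + 1) = deltaFunPos m x := by
  rw [Complex.ext_iff, deltaPos_re, deltaPos_re, deltaPos_im, deltaPos_im,
    show 2 * Real.pi * m * (x + 1) = 2 * Real.pi * m * x + m * (2 * Real.pi) by ring,
    show 2 * Real.pi * (x + 1) = 2 * Real.pi * x + 2 * Real.pi by ring,
    Real.cos_add_nat_mul_two_pi, Real.sin_add_nat_mul_two_pi, Real.cos_add_two_pi,
    Real.sin_add_two_pi]
  exact ⟨rfl, rfl⟩

/-- crossing pairs -/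
def PP (N : ℕ) (d : ℝ) (k : ℤ) : ℝ × ℝ :=
  ((2 * k + 1) / (2 * N) - d / 2, (2 * k + 1) / (2 * N) + d / 2)

lemma deltaPos_main (N : ℕ) (hN : 1 ≤ N) : ∃ d : ℝ, 0 < d ∧ d * (N + 1) < 1 ∧
    (∀ x y, x < y → y < x + 1 → (deltaFunPos (N + 1) x = deltaFunPos (N + 1) y ↔
      (∃ k, (x, y) = PP N d k) ∨ (∃ k, (y, x + 1) = PP N d k))) ∧
    ∀ k, det2 (deriv (deltaFunPos (N + 1)) (PP N d k).1)
      (deriv (deltaFunPos (N + 1)) (PP N d k).2) < 0 := by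
  obtain ⟨v, hv0, hmv, hsin, hcos, huniq⟩ := exists_v (N + 1) (by omega)
  have hpi := Real.pi_pos
  have hN' : (1:ℝ) ≤ N := by exact_mod_cast hN
  have hvpi : v < Real.pi := by push_cast at hmv; nlinarith
  have hsv : 0 < Real.sin v := Real.sin_pos_of_pos_of_lt_pi hv0 hvpi
  have hP1 : ∀ k : ℤ, ∀ z : ℝ × ℝ, z = PP N (v / Real.pi) k →
      Real.pi * (z.2 - z.1) = v ∧ (((N + 1 : ℕ) : ℝ) - 1) * (Real.pi * (z.1 + z.2)) =
        Real.pi + k * (2 * Real.pi) := by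
    rintro k z rfl
    simp only [PP]
    constructor
    · field_simp; ring
    · push_cast; field_simp; ring
  have hback : ∀ k : ℤ, ∀ x y, (x, y) = PP N (v / Real.pi) k →
      deltaFunPos (N + 1) x = deltaFunPos (N + 1) y := by
    intro k x y h
    obtain ⟨h1, h2⟩ := hP1 k _ h
    simp only at h1 h2
    rw [deltaPos_eq_iff, h1, h2, Real.cos_add_int_mul_two_pi, Real.sin_add_int_mul_two_pi,
      Real.cos_pi, Real.sin_pi, hsin]
    constructor <;> ring
  have hforw : ∀ x y, Real.pi * (y - x) = v → deltaFunPos (N + 1) x = deltaFunPos (N + 1) y →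
      ∃ k, (x, y) = PP N (v / Real.pi) k := by
    intro x y hxy h
    rw [deltaPos_eq_iff, hxy, hsin] at h
    have hc : Real.cos ((((N + 1 : ℕ) : ℝ) - 1) * (Real.pi * (x + y))) = -1 := by
      have : 0 < (2 * ((N + 1 : ℕ):ℝ) / 3) * Real.sin v := by positivity
      apply mul_right_cancel₀ this.ne'
      rw [h.2]; ring
    obtain ⟨k, hk⟩ := Real.cos_eq_neg_one_iff.1 hc
    refine ⟨k, ?_⟩
    have hs : x + y = (2 * k + 1) / N := by
      rw [eq_div_iff (by positivity)]
      apply mul_left_cancel₀ hpi.ne'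
      push_cast at hk
      linear_combination -hk
    have hdiff : y - x = v / Real.pi := by
      rw [eq_div_iff hpi.ne']; linarith
    simp only [PP, ← hdiff]
    have hs' : (2 * (k:ℝ) + 1) / (2 * N) = (x + y) / 2 := by
      rw [hs]; field_simp
    rw [hs']
    ext <;> simp only <;> ring
  refine ⟨v / Real.pi, by positivity, ?_, ?_, ?_⟩
  · rw [div_mul_eq_mul_div, div_lt_one hpi]; push_cast at hmv; linarith
  · intro x y hxy hyx
    constructor
    · intro h
      have h' := h
      rw [deltaPos_eq_iff] at h'
      have hw1 : 0 < Real.pi * (y - x) := mul_pos hpi (by linarith)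
      have hw2 : Real.pi * (y - x) < Real.pi := by nlinarith
      have hsw := Real.sin_pos_of_pos_of_lt_pi hw1 hw2
      have habs : |Real.sin (((N + 1 : ℕ) : ℝ) * (Real.pi * (y - x)))| =
          (2 * ((N + 1 : ℕ):ℝ) / 3) * Real.sin (Real.pi * (y - x)) := by
        rw [← abs_of_nonneg (show 0 ≤ (2 * ((N + 1 : ℕ):ℝ) / 3) * Real.sin (Real.pi * (y - x))
          by positivity), ← sq_eq_sq_iff_abs_eq_abs]
        obtain ⟨h1, h2⟩ := h'
        have e : (2 * ((N + 1 : ℕ):ℝ) / 3) * Real.sin (Real.pi * (y - x)) =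
          -(Real.cos ((((N + 1 : ℕ) : ℝ) - 1) * (Real.pi * (x + y))) *
            Real.sin (((N + 1 : ℕ) : ℝ) * (Real.pi * (y - x)))) := by rw [h2]; ring
        rw [e]
        have := Real.sin_sq_add_cos_sq ((((N + 1 : ℕ) : ℝ) - 1) * (Real.pi * (x + y)))
        generalize Real.sin ((((N + 1 : ℕ) : ℝ) - 1) * (Real.pi * (x + y))) = sB at *
        generalize Real.cos ((((N + 1 : ℕ) : ℝ) - 1) * (Real.pi * (x + y))) = cB at *
        generalize Real.sin (((N + 1 : ℕ) : ℝ) * (Real.pi * (y - x))) = S at *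
        linear_combination (-S^2) * this + sB * S * h1
      rcases huniq _ hw1 hw2 habs with h1 | h1
      · exact Or.inl (hforw x y h1 h)
      · right
        apply hforw y (x + 1)
        · linarith
        · rw [deltaPos_periodic, h]
    · rintro (⟨k, hk⟩ | ⟨k, hk⟩)
      · exact hback k x y hk
      · rw [← deltaPos_periodic]; exact (hback k _ _ hk).symm
  · intro k
    obtain ⟨h1, h2⟩ := hP1 k _ rfl
    rw [deltaPos_det, h1, h2, Real.cos_add_int_mul_two_pi, Real.cos_pi, Real.sin_add,
      Real.sin_two_mul, Real.sin_two_mul, hsin]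
    set r := (2 * ((N + 1 : ℕ):ℝ) / 3) with hr
    have hr0 : 0 < r := by positivity
    set M := ((N + 1 : ℕ):ℝ) with hM
    have hM2 : 1 < M := by rw [hM]; push_cast; linarith
    have : 4 * Real.pi ^ 2 * (r * Real.sin v * (M - 1)) * (M * Real.cos (M * v) - r * Real.cos v) < 0 := by
      apply mul_neg_of_pos_of_neg
      · have : 0 < M - 1 := by linarith
        positivity
      · linarith
    have h4 : 0 < Real.pi ^ 2 := by positivity
    nlinarith [this]

lemma PP_inj (N : ℕ) (hN : 1 ≤ N) (d : ℝ) : Function.Injective (PP N d) := by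
  intro a b h
  have hN' : (0:ℝ) < N := by exact_mod_cast hN
  simp only [PP, Prod.mk.injEq] at h
  have h1 : (2 * (a:ℝ) + 1) / (2 * N) = (2 * b + 1) / (2 * N) := by linarith [h.1]
  rw [div_left_inj' (by positivity)] at h1
  have : (a:ℝ) = b := by linarith
  exact_mod_cast this

section comb
variable (N : ℕ) (hN : 1 ≤ N) (d : ℝ) (hd : 0 < d) (hdN : d * (N + 1) < 1) (f : ℝ → ℂ)
  (hf : ∀ x y, x < y → y < x + 1 → (f x = f y ↔
      (∃ k, (x, y) = PP N d k) ∨ (∃ k, (y, x + 1) = PP N d k)))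
  (hdet : ∀ k, det2 (deriv f (PP N d k).1) (deriv f (PP N d k).2) < 0)

lemma two_d (N : ℕ) (hN : 1 ≤ N) (d : ℝ) (hd : 0 < d) (hdN : d * (N + 1) < 1) : 2 * d < 1 := by
  have hN' : (1:ℝ) ≤ N := by exact_mod_cast hN
  nlinarith

lemma cc (N : ℕ) (hN : 1 ≤ N) (k : ℤ) : ((2 * (k:ℝ) + 1) / (2 * N)) * N = k + 1 / 2 := by
  have hN' : (0:ℝ) < N := by exact_mod_cast hN
  field_simp

include hN hd hdN hf in
lemma pairs_eq : crossingPairsF f = ↑((Finset.Ico (0:ℤ) N).image (PP N d)) := by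
  have hN' : (1:ℝ) ≤ N := by exact_mod_cast hN
  have h2d := two_d N hN d hd hdN
  ext ⟨x, y⟩
  simp only [crossingPairsF, Set.mem_setOf_eq, Finset.coe_image, Finset.coe_Ico, Set.mem_image,
    Set.mem_Ico]
  constructor
  · rintro ⟨⟨hx0, hx1⟩, ⟨hy0, hy1⟩, hxy, he⟩
    rcases (hf x y hxy (by linarith)).1 he with ⟨k, hk⟩ | ⟨k, hk⟩
    · refine ⟨k, ?_, hk.symm⟩
      have hc := cc N hN k
      simp only [PP, Prod.mk.injEq] at hk
      obtain ⟨h1, h2⟩ := hk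
      generalize (2 * (k:ℝ) + 1) / (2 * N) = c at *
      constructor
      · have : (-1:ℝ) < k := by nlinarith
        have : (-1:ℤ) < k := by exact_mod_cast this
        omega
      · have : (k:ℝ) < N := by nlinarith
        exact_mod_cast this
    · exfalso
      have hc := cc N hN k
      simp only [PP, Prod.mk.injEq] at hk
      obtain ⟨h1, h2⟩ := hk
      generalize (2 * (k:ℝ) + 1) / (2 * N) = c at *
      have a1 : (N:ℝ) - 1 < k := by nlinarith
      have a2 : (k:ℝ) < N := by nlinarith
      have a1' : (N:ℤ) - 1 < k := by exact_mod_cast a1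
      have a2' : k < N := by exact_mod_cast a2
      omega
  · rintro ⟨k, ⟨hk0, hk1⟩, hk⟩
    have hc := cc N hN k
    have hk' := hk
    simp only [PP, Prod.mk.injEq] at hk'
    obtain ⟨h1, h2⟩ := hk'
    have b0 : (0:ℝ) ≤ k := by exact_mod_cast hk0
    have b1 : (k:ℝ) + 1 ≤ N := by exact_mod_cast hk1
    generalize (2 * (k:ℝ) + 1) / (2 * N) = c at *
    have g1 : 0 ≤ x := by
      by_contra hcon
      push Not at hcon
      nlinarith
    have g2 : y < 1 := by
      by_contra hcon
      push Not at hcon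
      nlinarith
    exact ⟨⟨g1, by linarith⟩, ⟨by linarith, g2⟩, by linarith,
      (hf x y (by linarith) (by linarith)).2 (Or.inl ⟨k, hk.symm⟩)⟩

include hN hd hdN hf in
lemma arc_in (k : ℤ) : arcIndex f (PP N d k).1 (PP N d k).2 = 0 := by
  have h2d := two_d N hN d hd hdN
  unfold arcIndex
  have : {q : ℝ × ℝ | q.1 ∈ Set.Ioo (PP N d k).1 (PP N d k).2 ∧
      q.2 ∈ Set.Ioo (PP N d k).1 (PP N d k).2 ∧ q.1 < q.2 ∧ f q.1 = f q.2} = ∅ := by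
    ext ⟨x, y⟩
    simp only [Set.mem_setOf_eq, Set.mem_empty_iff_false, iff_false]
    rintro ⟨⟨hx0, hx1⟩, ⟨hy0, hy1⟩, hxy, he⟩
    simp only [PP] at hx0 hx1 hy0 hy1
    rcases (hf x y hxy (by linarith)).1 he with ⟨j, hj⟩ | ⟨j, hj⟩
    · simp only [PP, Prod.mk.injEq] at hj
      linarith [hj.1, hj.2]
    · simp only [PP, Prod.mk.injEq] at hj
      linarith [hj.1, hj.2]
  rw [this, finsum_mem_empty]

include hN hd hdN hf hdet in
lemma arc_out (k : ℤ) : arcIndex f (PP N d k).2 ((PP N d k).1 + 1) = 1 - N := by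
  have h2d := two_d N hN d hd hdN
  have hN' : (1:ℝ) ≤ N := by exact_mod_cast hN
  unfold arcIndex
  have : {q : ℝ × ℝ | q.1 ∈ Set.Ioo (PP N d k).2 ((PP N d k).1 + 1) ∧
      q.2 ∈ Set.Ioo (PP N d k).2 ((PP N d k).1 + 1) ∧ q.1 < q.2 ∧ f q.1 = f q.2} =
      ↑((Finset.Ico (k + 1) (k + N)).image (PP N d)) := by
    have hck := cc N hN k
    ext ⟨x, y⟩
    simp only [Set.mem_setOf_eq, Finset.coe_image, Finset.coe_Ico, Set.mem_image, Set.mem_Ico]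
    simp only [show (PP N d k).1 = (2 * (k:ℝ) + 1) / (2 * N) - d / 2 from rfl,
      show (PP N d k).2 = (2 * (k:ℝ) + 1) / (2 * N) + d / 2 from rfl]
    generalize (2 * (k:ℝ) + 1) / (2 * N) = ck at *
    constructor
    · rintro ⟨⟨hx0, hx1⟩, ⟨hy0, hy1⟩, hxy, he⟩
      rcases (hf x y hxy (by linarith)).1 he with ⟨j, hj⟩ | ⟨j, hj⟩
      · refine ⟨j, ?_, hj.symm⟩
        have hc := cc N hN j
        simp only [PP, Prod.mk.injEq] at hj
        obtain ⟨h1, h2⟩ := hj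
        generalize (2 * (j:ℝ) + 1) / (2 * N) = c at *
        constructor
        · have : (k:ℝ) < j := by nlinarith
          have : k < j := by exact_mod_cast this
          omega
        · have : (j:ℝ) < k + N := by nlinarith
          exact_mod_cast this
      · simp only [PP, Prod.mk.injEq] at hj
        linarith [hj.1, hj.2]
    · rintro ⟨j, ⟨hj0, hj1⟩, hj⟩
      have hc := cc N hN j
      have hj' := hj
      simp only [PP, Prod.mk.injEq] at hj'
      obtain ⟨h1, h2⟩ := hj'
      have b0 : (k:ℝ) + 1 ≤ j := by exact_mod_cast hj0
      have b1 : (j:ℝ) + 1 ≤ k + N := by exact_mod_cast hj1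
      generalize (2 * (j:ℝ) + 1) / (2 * N) = c at *
      have g1 : ck + d / 2 < x := by
        by_contra hcon
        push Not at hcon
        nlinarith
      have g2 : y < ck - d / 2 + 1 := by
        by_contra hcon
        push Not at hcon
        nlinarith
      exact ⟨⟨g1, by linarith⟩, ⟨by linarith, g2⟩, by linarith,
        (hf x y (by linarith) (by linarith)).2 (Or.inl ⟨j, hj.symm⟩)⟩
  rw [this, finsum_mem_coe_finset, Finset.sum_image (fun a _ b _ h => PP_inj N hN d h)]
  have hs : ∀ j ∈ Finset.Ico (k + 1) (k + N), crossSign f (PP N d j).1 (PP N d j).2 = -1 := by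
    intro j _
    unfold crossSign
    rw [if_neg (not_lt.2 (hdet j).le)]
  rw [Finset.sum_congr rfl hs, Finset.sum_const, Int.card_Ico]
  have : ((k + N - (k + 1)).toNat : ℤ) = N - 1 := by omega
  rw [nsmul_eq_mul, this]
  ring

end comb

lemma fX_pos (N : ℕ) (c : PlanarCurve) (hc : c.toFun = deltaFunPos (N + 1)) :
    fX c = (N : ℤ) • FreeAbelianGroup.of ((1 - N : ℤ), (0 : ℤ)) := by
  unfold fX
  rw [hc]
  rcases Nat.eq_zero_or_pos N with rfl | hN
  · have : crossingPairsF (deltaFunPos (0 + 1)) = ∅ := by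
      ext ⟨x, y⟩
      simp only [crossingPairsF, Set.mem_setOf_eq, Set.mem_empty_iff_false, iff_false]
      rintro ⟨⟨hx0, hx1⟩, ⟨hy0, hy1⟩, hxy, he⟩
      rw [deltaPos_eq_iff] at he
      have h2 := he.2
      norm_num at h2
      have := Real.sin_pos_of_pos_of_lt_pi (mul_pos Real.pi_pos (sub_pos.2 hxy))
        (by nlinarith [Real.pi_pos])
      linarith
    rw [this, finsum_mem_empty]
    simp
  · obtain ⟨d, hd, hdN, hf, hdet⟩ := deltaPos_main N hN
    rw [pairs_eq N hN d hd hdN _ hf, finsum_mem_coe_finset,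
      Finset.sum_image (fun a _ b _ h => PP_inj N hN d h)]
    rw [Finset.sum_congr rfl (g := fun _ => FreeAbelianGroup.of ((1 - N : ℤ), (0 : ℤ)))]
    · rw [Finset.sum_const, Int.card_Ico]
      simp
    · intro k _
      rw [if_neg (not_lt.2 (hdet k).le), arc_in N hN d hd hdN _ hf,
        arc_out N hN d hd hdN _ hf hdet]

lemma delta0_deriv (t : ℝ) : deriv (deltaFun 0) t =
    ((Real.cos (2 * Real.pi * t) * (2 * Real.pi) : ℝ) : ℂ) +
    ((Real.cos (4 * Real.pi * t) * (4 * Real.pi) : ℝ) : ℂ) * Complex.I := by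
  have key : ∀ a : ℝ, HasDerivAt (fun t : ℝ => ((Real.sin (a * t) : ℝ) : ℂ))
      ((Real.cos (a * t) * a : ℝ) : ℂ) t := by
    intro a
    have h1 : HasDerivAt (fun t : ℝ => a * t) a t := by
      simpa using (hasDerivAt_id t).const_mul a
    exact h1.sin.ofReal_comp
  unfold deltaFun
  rw [if_pos rfl]
  exact ((key (2 * Real.pi)).add ((key (4 * Real.pi)).mul_const Complex.I)).deriv

lemma delta0_eq (x y : ℝ) (hxy : x < y) (hy : y < x + 1) (h : deltaFun 0 x = deltaFun 0 y) :
    Real.sin (2 * Real.pi * x) = 0 ∧ Real.sin (2 * Real.pi * y) = 0 := by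
  unfold deltaFun at h
  rw [if_pos rfl, Complex.ext_iff] at h
  simp only [Complex.add_re, Complex.add_im, Complex.mul_re, Complex.mul_im,
    Complex.ofReal_re, Complex.ofReal_im, Complex.I_re, Complex.I_im] at h
  obtain ⟨h1, h2⟩ := h
  rw [show 4 * Real.pi * x = 2 * (2 * Real.pi * x) by ring,
    show 4 * Real.pi * y = 2 * (2 * Real.pi * y) by ring, Real.sin_two_mul, Real.sin_two_mul] at h2
  have h1' : Real.sin (2 * Real.pi * x) = Real.sin (2 * Real.pi * y) := by linarith
  rw [← h1']
  by_contra hcon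
  have hne : Real.sin (2 * Real.pi * x) ≠ 0 := fun h => hcon ⟨h, h⟩
  rw [← h1'] at h2
  have hc : Real.cos (2 * Real.pi * x) = Real.cos (2 * Real.pi * y) := by
    apply mul_left_cancel₀ hne
    linarith
  have : Real.cos (2 * Real.pi * y - 2 * Real.pi * x) = 1 := by
    rw [Real.cos_sub, ← h1', ← hc]
    nlinarith [Real.sin_sq_add_cos_sq (2 * Real.pi * x)]
  have hpi := Real.pi_pos
  have := (Real.cos_eq_one_iff_of_lt_of_lt (by nlinarith) (by nlinarith)).1 this
  nlinarith

lemma sin_half (n : ℤ) (x : ℝ) (h1 : n / 2 < x) (h2 : x < (n + 1) / 2) :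
    Real.sin (2 * Real.pi * x) ≠ 0 := by
  intro h
  obtain ⟨k, hk⟩ := Real.sin_eq_zero_iff.1 h
  have hpi := Real.pi_pos
  have hk' : (k : ℝ) = 2 * x := by
    apply mul_right_cancel₀ hpi.ne'
    linarith
  have a : (n:ℝ) < k := by linarith
  have b : (k:ℝ) < n + 1 := by linarith
  have a' : n < k := by exact_mod_cast a
  have b' : k < n + 1 := by exact_mod_cast b
  omega

lemma arc0 (n : ℤ) (α β : ℝ) (hα : α = n / 2) (hβ : β = (n + 1) / 2) :
    arcIndex (deltaFun 0) α β = 0 := by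
  unfold arcIndex
  have : {q : ℝ × ℝ | q.1 ∈ Set.Ioo α β ∧
      q.2 ∈ Set.Ioo α β ∧ q.1 < q.2 ∧ deltaFun 0 q.1 = deltaFun 0 q.2} = ∅ := by
    ext ⟨x, y⟩
    simp only [Set.mem_setOf_eq, Set.mem_empty_iff_false, iff_false]
    rintro ⟨⟨hx0, hx1⟩, ⟨hy0, hy1⟩, hxy, he⟩
    exact sin_half n x (by linarith) (by linarith) (delta0_eq x y hxy (by linarith) he).1
  rw [this, finsum_mem_empty]

lemma fX_zero (c : PlanarCurve) (hc : c.toFun = deltaFun 0) :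
    fX c = FreeAbelianGroup.of ((0 : ℤ), (0 : ℤ)) := by
  unfold fX
  rw [hc]
  have : crossingPairsF (deltaFun 0) = {((0:ℝ), (1/2 : ℝ))} := by
    ext ⟨x, y⟩
    simp only [crossingPairsF, Set.mem_setOf_eq, Set.mem_singleton_iff, Prod.mk.injEq]
    constructor
    · rintro ⟨⟨hx0, hx1⟩, ⟨hy0, hy1⟩, hxy, he⟩
      obtain ⟨h1, h2⟩ := delta0_eq x y hxy (by linarith) he
      have key : ∀ z : ℝ, 0 ≤ z → z < 1 → Real.sin (2 * Real.pi * z) = 0 → z = 0 ∨ z = 1 / 2 := by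
        intro z hz0 hz1 hz
        by_contra hcon
        push Not at hcon
        rcases lt_or_gt_of_ne hcon.2 with h | h
        · exact sin_half 0 z (by simpa using lt_of_le_of_ne hz0 hcon.1.symm) (by simpa using h) hz
        · exact sin_half 1 z (by simpa using h) (by norm_num; exact hz1) hz
      rcases key x hx0 hx1 h1 with h | h <;> rcases key y hy0 hy1 h2 with h' | h'
      · linarith
      · exact ⟨h, h'⟩
      · linarith
      · linarith
    · rintro ⟨rfl, rfl⟩
      refine ⟨by norm_num, by norm_num, by norm_num, ?_⟩
      unfold deltaFun
      rw [if_pos rfl]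
      simp only [show 2 * Real.pi * (1 / 2) = Real.pi by ring,
        show 4 * Real.pi * (1 / 2) = 2 * Real.pi by ring]
      simp
  rw [this, finsum_mem_singleton]
  have hdet : 0 < det2 (deriv (deltaFun 0) 0) (deriv (deltaFun 0) (1 / 2)) := by
    rw [delta0_deriv, delta0_deriv]
    simp only [show 2 * Real.pi * (1 / 2) = Real.pi by ring,
        show 4 * Real.pi * (1 / 2) = 2 * Real.pi by ring, det2, Complex.add_re, Complex.add_im,
        Complex.mul_re, Complex.mul_im,
        Complex.ofReal_re, Complex.ofReal_im, Complex.I_re, Complex.I_im, mul_zero, Real.cos_zero,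
        Real.cos_pi, Real.cos_two_pi]
    have := Real.pi_pos
    nlinarith
  simp only
  rw [if_pos hdet, arc0 0 _ _ (by norm_num) (by norm_num), arc0 1 _ _ (by norm_num) (by norm_num)]

end PlanarCurve

/-- The values of `f^X` and `g = φ ∘ f^X` on the standard curves:
`f^X(δ_0) = X_{0,0}`, `g(δ_0) = 0`, and for `ω > 0`,
`f^X(δ_ω) = (ω - 1)·X_{2-ω,0}` and `g(δ_ω) = -ω² + 3ω - 2`. -/
theorem statement17 :
    (∀ δ : PlanarCurve, δ.toFun = PlanarCurve.deltaFun 0 →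
      PlanarCurve.fX δ = FreeAbelianGroup.of ((0 : ℤ), (0 : ℤ)) ∧
      PlanarCurve.g δ = 0) ∧
    (∀ ω : ℤ, 0 < ω → ∀ δ : PlanarCurve, δ.toFun = PlanarCurve.deltaFun ω →
      PlanarCurve.fX δ = (ω - 1) • FreeAbelianGroup.of ((2 - ω : ℤ), (0 : ℤ)) ∧
      PlanarCurve.g δ = -ω ^ 2 + 3 * ω - 2) := by
  refine ⟨fun δ h => ?_, fun ω hω δ h => ?_⟩
  · have := PlanarCurve.fX_zero δ h
    exact ⟨this, by simp [PlanarCurve.g, this, phi]⟩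
  · obtain ⟨N, rfl⟩ : ∃ N : ℕ, ω = N + 1 := ⟨(ω - 1).toNat, by omega⟩
    have h' : δ.toFun = PlanarCurve.deltaFunPos (N + 1) := by
      rw [h]
      unfold PlanarCurve.deltaFun
      rw [if_neg (by omega), if_pos hω]
      congr 1
    have hX := PlanarCurve.fX_pos N δ h'
    constructor
    · rw [hX, show (N : ℤ) + 1 - 1 = N by ring, show 2 - ((N : ℤ) + 1) = 1 - N by ring]
    · rw [PlanarCurve.g, hX, map_zsmul]
      simp only [phi, FreeAbelianGroup.lift_apply_of, smul_eq_mul]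
      ring

end CurvePaper
end
end
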